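/- arXiv:1705.01272 — 3 statements merged into one kernel-verified Lean document; each statement's English description precedes it below -/
import Mathlib

section
/- For every odd integer n ≥ 3 there exist a set S of n points in ℝ³ and a family T of at least (n−1)²/4 triangles on S such that for any two distinct triangles in T, the intersection of their convex hulls is either empty, or equal to a single common vertex, or equal to a common edge. Consequently, the maximum size f₂(n,3) of such a family satisfies f₂(n,3) = Θ(n²) as n → ∞. -/
open EuclideanGeometry

noncomputable section

abbrev E3 : Type := EuclideanSpace ℝ (Fin 3)

/-- A triangle on a point set `S` in ℝ³: a 3-element affinely independent subset of `S`. -/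
def IsTriangleOn (S t : Finset E3) : Prop :=
  t ⊆ S ∧ t.card = 3 ∧ AffineIndependent ℝ (fun p : (t : Set E3) => (p : E3))

/-- The convex hulls of `t₁` and `t₂` are disjoint, or intersect in a single common
vertex, or in a common edge. -/
def VertexEdgeIntersect (t₁ t₂ : Finset E3) : Prop :=
  convexHull ℝ (t₁ : Set E3) ∩ convexHull ℝ (t₂ : Set E3) = ∅ ∨
  (∃ v, v ∈ t₁ ∧ v ∈ t₂ ∧
    convexHull ℝ (t₁ : Set E3) ∩ convexHull ℝ (t₂ : Set E3) = {v}) ∨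
  (∃ a b, a ≠ b ∧ a ∈ t₁ ∧ b ∈ t₁ ∧ a ∈ t₂ ∧ b ∈ t₂ ∧
    convexHull ℝ (t₁ : Set E3) ∩ convexHull ℝ (t₂ : Set E3) = segment ℝ a b)

/-- `f₂(n,3)`: the maximum possible number of triangles on `n` points in ℝ³ such that the
convex hulls of any two of them are disjoint, or intersect in a vertex or an edge. -/
noncomputable def f2 (n : ℕ) : ℕ :=
  sSup {m | ∃ (S : Finset E3) (T : Finset (Finset E3)), S.card = n ∧
    (∀ t ∈ T, IsTriangleOn S t) ∧
    (∀ t₁ ∈ T, ∀ t₂ ∈ T, t₁ ≠ t₂ → VertexEdgeIntersect t₁ t₂) ∧ T.card = m}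

/-!
For the lower bound, put points `Aᵢ` on one line and `Bⱼ` on a second line skew to it. The triangles
`Aᵢ Aᵢ₊₁ Bⱼ` with a fixed apex lie in one plane and tile a region of it, and the planes of two
different apices meet only in the line of the `Aᵢ`.

For the upper bound, choose a linear functional `ℓ` that separates the points and assign each
triangle to its `ℓ`-lowest vertex `v`. The central projection from `v` to a plane `ℓ = const` above
`v` turns the edges opposite to `v` into segments that meet only in common endpoints, that is, into
a plane straight-line graph with at most `n` vertices and hence `O(n)` edges.
-/

/-! ### Edges of plane straight-line graphs -/

/-- A straight edge in the plane, given by its left and its right endpoint. -/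
abbrev PlaneEdge : Type := (ℝ × ℝ) × (ℝ × ℝ)

/-- The slope of the line through the endpoints of an edge (`0` for a vertical edge). -/
def edgeSlope (e : PlaneEdge) : ℝ := (e.2.2 - e.1.2) / (e.2.1 - e.1.1)

/-- The ordinate at abscissa `x` of the line spanned by an edge. It is defined for all `x`, also
outside the range of abscissae of the edge. -/
def lineHeight (e : PlaneEdge) (x : ℝ) : ℝ := e.1.2 + edgeSlope e * (x - e.1.1)

section LineHeight

variable {e f : PlaneEdge} {x : ℝ}

lemma lineHeight_left (e : PlaneEdge) : lineHeight e e.1.1 = e.1.2 := by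
  simp [lineHeight]

lemma lineHeight_eq_right_add (h : e.1.1 < e.2.1) (x : ℝ) :
    lineHeight e x = e.2.2 + edgeSlope e * (x - e.2.1) := by
  have : e.2.1 - e.1.1 ≠ 0 := (sub_pos.2 h).ne'
  simp only [lineHeight, edgeSlope]
  field_simp
  ring

lemma lineHeight_right (h : e.1.1 < e.2.1) : lineHeight e e.2.1 = e.2.2 := by
  simp [lineHeight_eq_right_add h]

lemma lineHeight_lt_iff_of_left_eq (hfe : f.1 = e.1) (hx : e.1.1 < x) :
    lineHeight e x < lineHeight f x ↔ edgeSlope e < edgeSlope f := by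
  simp only [lineHeight, hfe, add_lt_add_iff_left]
  exact mul_lt_mul_iff_left₀ (sub_pos.2 hx)

lemma lineHeight_lt_iff_of_right_eq (he : e.1.1 < e.2.1) (hf : f.1.1 < f.2.1) (hfe : f.2 = e.2)
    (hx : x < e.2.1) : lineHeight e x < lineHeight f x ↔ edgeSlope f < edgeSlope e := by
  simp only [lineHeight_eq_right_add he, lineHeight_eq_right_add hf, hfe, add_lt_add_iff_left]
  exact mul_lt_mul_right_of_neg (sub_neg.2 hx)

lemma mk_lineHeight_mem_segment (h : e.1.1 < e.2.1) (hx : x ∈ Set.Icc e.1.1 e.2.1) :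
    (x, lineHeight e x) ∈ segment ℝ e.1 e.2 := by
  have hpos : 0 < e.2.1 - e.1.1 := sub_pos.2 h
  rw [segment_eq_image']
  refine ⟨(x - e.1.1) / (e.2.1 - e.1.1), ⟨div_nonneg (sub_nonneg.2 hx.1) hpos.le,
    (div_le_one hpos).2 (sub_le_sub_right hx.2 _)⟩, Prod.ext ?_ ?_⟩
  · simp [div_mul_cancel₀ _ hpos.ne']
  · simp only [Prod.snd_add, Prod.smul_snd, Prod.snd_sub, smul_eq_mul, lineHeight, edgeSlope]
    ring

lemma exists_lineHeight_eq_of_lt_of_lt {p q : ℝ} (hp : lineHeight e p < lineHeight f p)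
    (hq : lineHeight f q < lineHeight e q) :
    ∃ x, min p q < x ∧ x < max p q ∧ lineHeight e x = lineHeight f x := by
  have hcont : Continuous fun x => lineHeight e x - lineHeight f x := by
    unfold lineHeight
    fun_prop
  obtain ⟨x, hx, h0⟩ := intermediate_value_uIcc (a := p) (b := q) hcont.continuousOn
    (Set.mem_uIcc_of_le (sub_neg.2 hp).le (sub_pos.2 hq).le)
  have heq : lineHeight e x = lineHeight f x := sub_eq_zero.1 h0
  have hxp : x ≠ p := by rintro rfl; exact hp.ne heq
  have hxq : x ≠ q := by rintro rfl; exact hq.ne' heq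
  rw [Set.uIcc, Set.mem_Icc] at hx
  exact ⟨x, by grind, by grind, heq⟩

end LineHeight

/-- A plane straight-line graph with vertices in `V`, without vertical edges: edges are stored from
left to right, and two distinct edges meet only in common endpoints. -/
structure IsPlaneGraph (V : Finset (ℝ × ℝ)) (E : Finset PlaneEdge) : Prop where
  left_mem : ∀ e ∈ E, e.1 ∈ V
  right_mem : ∀ e ∈ E, e.2 ∈ V
  left_lt_right : ∀ e ∈ E, e.1.1 < e.2.1
  inter_subset : ∀ e ∈ E, ∀ f ∈ E, e ≠ f →
    segment ℝ e.1 e.2 ∩ segment ℝ f.1 f.2 ⊆ {e.1, e.2} ∩ {f.1, f.2}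

/-- The edge `e` is the first edge of `E` met when moving vertically down from the point `w`, and it
is met in its relative interior. -/
def IsDirectlyBelow (E : Finset PlaneEdge) (e : PlaneEdge) (w : ℝ × ℝ) : Prop :=
  w.1 ∈ Set.Ioo e.1.1 e.2.1 ∧ lineHeight e w.1 < w.2 ∧
    ∀ g ∈ E, w.1 ∈ Set.Icc g.1.1 g.2.1 → lineHeight e w.1 < lineHeight g w.1 →
      w.2 ≤ lineHeight g w.1

/-- The point `w` lies above the edge `e` and not above the edge `f`, at an abscissa interior to `e`
and not to the right of `f`. For `f` issuing from the left endpoint of `e` this is the region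
between the two edges. -/
def IsBetween (e f : PlaneEdge) (w : ℝ × ℝ) : Prop :=
  w.1 ∈ Set.Ioo e.1.1 e.2.1 ∧ w.1 ≤ f.2.1 ∧ lineHeight e w.1 < w.2 ∧ w.2 ≤ lineHeight f w.1

namespace IsPlaneGraph

variable {V : Finset (ℝ × ℝ)} {E : Finset PlaneEdge} {e f g : PlaneEdge} {x : ℝ}

lemma mk_lineHeight_mem_endpoints (hG : IsPlaneGraph V E) (he : e ∈ E) (hf : f ∈ E) (hef : e ≠ f)
    (hxe : x ∈ Set.Icc e.1.1 e.2.1) (hxf : x ∈ Set.Icc f.1.1 f.2.1)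
    (h : lineHeight e x = lineHeight f x) :
    (x, lineHeight e x) ∈ ({e.1, e.2} ∩ {f.1, f.2} : Set (ℝ × ℝ)) :=
  hG.inter_subset e he f hf hef
    ⟨mk_lineHeight_mem_segment (hG.left_lt_right e he) hxe,
      h ▸ mk_lineHeight_mem_segment (hG.left_lt_right f hf) hxf⟩

lemma lineHeight_ne (hG : IsPlaneGraph V E) (he : e ∈ E) (hf : f ∈ E) (hef : e ≠ f)
    (hxe : x ∈ Set.Ioo e.1.1 e.2.1) (hxf : x ∈ Set.Icc f.1.1 f.2.1) :
    lineHeight e x ≠ lineHeight f x := by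
  intro h
  rcases (hG.mk_lineHeight_mem_endpoints he hf hef (Set.Ioo_subset_Icc_self hxe) hxf h).1 with h | h
  · exact hxe.1.ne' (congrArg Prod.fst h)
  · exact hxe.2.ne (congrArg Prod.fst h)

lemma lineHeight_le_of_lt (hG : IsPlaneGraph V E) (he : e ∈ E) (hf : f ∈ E) {p q : ℝ}
    (hpe : p ∈ Set.Icc e.1.1 e.2.1) (hpf : p ∈ Set.Icc f.1.1 f.2.1)
    (hqe : q ∈ Set.Icc e.1.1 e.2.1) (hqf : q ∈ Set.Icc f.1.1 f.2.1)
    (h : lineHeight e p < lineHeight f p) : lineHeight e q ≤ lineHeight f q := by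
  by_contra! hq
  obtain ⟨x, hx₁, hx₂, hx⟩ := exists_lineHeight_eq_of_lt_of_lt h hq
  have hef : e ≠ f := by rintro rfl; exact h.false
  exact hG.lineHeight_ne he hf hef
    ⟨(le_min hpe.1 hqe.1).trans_lt hx₁, hx₂.trans_le (max_le hpe.2 hqe.2)⟩
    ⟨((le_min hpf.1 hqf.1).trans_lt hx₁).le, (hx₂.trans_le (max_le hpf.2 hqf.2)).le⟩ hx

lemma eq_of_left_eq_of_slope_eq (hG : IsPlaneGraph V E) (he : e ∈ E) (hf : f ∈ E)
    (hfst : e.1 = f.1) (hslope : edgeSlope e = edgeSlope f) : e = f := by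
  wlog hle : e.2.1 ≤ f.2.1 generalizing e f
  · exact (this hf he hfst.symm hslope.symm (le_of_not_ge hle)).symm
  by_contra hef
  have hlt := hG.left_lt_right e he
  have hmem := (hG.mk_lineHeight_mem_endpoints he hf hef ⟨hlt.le, le_rfl⟩
    ⟨hfst ▸ hlt.le, hle⟩ (by simp only [lineHeight, hfst, hslope])).2
  rw [lineHeight_right hlt] at hmem
  rcases hmem with h | h
  · exact hlt.ne' (by rw [hfst, ← h])
  · exact hef (Prod.ext hfst h)

lemma eq_of_right_eq_of_slope_eq (hG : IsPlaneGraph V E) (he : e ∈ E) (hf : f ∈ E)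
    (hsnd : e.2 = f.2) (hslope : edgeSlope e = edgeSlope f) : e = f := by
  wlog hle : f.1.1 ≤ e.1.1 generalizing e f
  · exact (this hf he hsnd.symm hslope.symm (le_of_not_ge hle)).symm
  by_contra hef
  have hlt := hG.left_lt_right e he
  have hmem := (hG.mk_lineHeight_mem_endpoints he hf hef ⟨le_rfl, hlt.le⟩ ⟨hle, hsnd ▸ hlt.le⟩
    (by rw [lineHeight_eq_right_add hlt, lineHeight_eq_right_add (hG.left_lt_right f hf), hsnd,
      hslope])).2
  rw [lineHeight_left] at hmem
  rcases hmem with h | h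
  · exact hef (Prod.ext h hsnd)
  · exact hlt.ne (by rw [hsnd, ← h])

lemma exists_isBetween (hG : IsPlaneGraph V E) (he : e ∈ E) (hf : f ∈ E) (hg : g ∈ E)
    (hfe : f.1 = e.1) (hef : edgeSlope e < edgeSlope f)
    (hge : g.2 = e.2) (hgslope : edgeSlope g < edgeSlope e) : ∃ w ∈ V, IsBetween e f w := by
  have hlt := hG.left_lt_right e he
  have hflt := hG.left_lt_right f hf
  have hglt := hG.left_lt_right g hg
  rcases lt_or_ge f.2.1 e.2.1 with hshort | hlong
  · refine ⟨f.2, hG.right_mem f hf, ⟨hfe ▸ hflt, hshort⟩, le_rfl, ?_, (lineHeight_right hflt).ge⟩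
    rw [← lineHeight_right hflt]
    exact (lineHeight_lt_iff_of_left_eq hfe (hfe ▸ hflt)).2 hef
  have hgf : lineHeight g e.2.1 < lineHeight f e.2.1 :=
    calc lineHeight g e.2.1 = lineHeight e e.2.1 := by
          rw [lineHeight_right hlt, ← hge, lineHeight_right hglt]
      _ < lineHeight f e.2.1 := (lineHeight_lt_iff_of_left_eq hfe hlt).2 hef
  have hf_range : ∀ x ∈ Set.Icc e.1.1 e.2.1, x ∈ Set.Icc f.1.1 f.2.1 := fun x hx =>
    ⟨hfe ▸ hx.1, hx.2.trans hlong⟩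
  have hg_right : e.2.1 ∈ Set.Icc g.1.1 g.2.1 := ⟨hge ▸ hglt.le, hge ▸ le_rfl⟩
  have hg_left : e.1.1 < g.1.1 := by
    by_contra! hle
    have hfg : lineHeight f e.1.1 < lineHeight g e.1.1 :=
      calc lineHeight f e.1.1 = lineHeight e e.1.1 := by
            rw [lineHeight_left, ← hfe, lineHeight_left]
        _ < lineHeight g e.1.1 := (lineHeight_lt_iff_of_right_eq hlt hglt hge hlt).2 hgslope
    exact hgf.not_ge <| hG.lineHeight_le_of_lt hf hg (hf_range _ ⟨le_rfl, hlt.le⟩)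
      ⟨hle, hlt.le.trans hg_right.2⟩ (hf_range _ ⟨hlt.le, le_rfl⟩) hg_right hfg
  have hg_lt : g.1.1 < e.2.1 := hge ▸ hglt
  have hg_mem : g.1.1 ∈ Set.Icc f.1.1 f.2.1 := hf_range _ ⟨hg_left.le, hg_lt.le⟩
  refine ⟨g.1, hG.left_mem g hg, ⟨hg_left, hg_lt⟩, hg_mem.2, ?_, ?_⟩
  · rw [← lineHeight_left g]
    exact (lineHeight_lt_iff_of_right_eq hlt hglt hge hg_lt).2 hgslope
  · rw [← lineHeight_left g]
    exact hG.lineHeight_le_of_lt hg hf hg_right (hf_range _ ⟨hlt.le, le_rfl⟩)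
      ⟨le_rfl, hglt.le⟩ hg_mem hgf

/-- An edge `g` separating `w` from `e` stays between `e` and `f` as it runs to the left. Either it
reaches the common endpoint of `e` and `f`, where the minimality of the slope of `f` excludes it, or
its left endpoint contradicts the minimality of `w`. -/
lemma isDirectlyBelow_of_isBetween (hG : IsPlaneGraph V E) (he : e ∈ E) (hf : f ∈ E)
    (hfe : f.1 = e.1)
    (hf_min : ∀ g ∈ E, g.1 = e.1 → edgeSlope e < edgeSlope g → edgeSlope f ≤ edgeSlope g)
    {w : ℝ × ℝ} (hw : IsBetween e f w)
    (hw_min : ∀ w' ∈ V, IsBetween e f w' → toLex w ≤ toLex w') : IsDirectlyBelow E e w := by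
  obtain ⟨hwe, hwf, hew, hw_le⟩ := hw
  refine ⟨hwe, hew, fun g hg hwg hlt => ?_⟩
  by_contra! hgw
  have hgf : lineHeight g w.1 < lineHeight f w.1 := hgw.trans_le hw_le
  have heg_ne : e ≠ g := by rintro rfl; exact hlt.false
  have hwe' := Set.Ioo_subset_Icc_self hwe
  have hwf' : w.1 ∈ Set.Icc f.1.1 f.2.1 := ⟨hfe ▸ hwe.1.le, hwf⟩
  have hbetween : ∀ q ∈ Set.Icc e.1.1 w.1, g.1.1 ≤ q →
      lineHeight e q ≤ lineHeight g q ∧ lineHeight g q ≤ lineHeight f q := fun q hq hgq =>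
    have hqg : q ∈ Set.Icc g.1.1 g.2.1 := ⟨hgq, hq.2.trans hwg.2⟩
    ⟨hG.lineHeight_le_of_lt he hg hwe' hwg ⟨hq.1, hq.2.trans hwe.2.le⟩ hqg hlt,
      hG.lineHeight_le_of_lt hg hf hwg hwf' hqg ⟨hfe ▸ hq.1, hq.2.trans hwf⟩ hgf⟩
  rcases le_or_gt g.1.1 e.1.1 with hle | hgt
  · have hmeet : lineHeight e e.1.1 = lineHeight g e.1.1 := by
      obtain ⟨heg, hgf⟩ := hbetween e.1.1 ⟨le_rfl, hwe.1.le⟩ hle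
      refine heg.antisymm (hgf.trans_eq ?_)
      rw [lineHeight_left, ← hfe, lineHeight_left]
    have hmem := (hG.mk_lineHeight_mem_endpoints he hg heg_ne ⟨le_rfl, (hwe.1.trans hwe.2).le⟩
      ⟨hle, hwe.1.le.trans hwg.2⟩ hmeet).2
    rw [lineHeight_left] at hmem
    rcases hmem with hge | hge
    · have hslope := (lineHeight_lt_iff_of_left_eq hge.symm hwe.1).1 hlt
      have hslope' := (lineHeight_lt_iff_of_left_eq (e := g) (hfe.trans hge) (hge ▸ hwe.1)).1 hgf
      exact hslope'.not_ge (hf_min g hg hge.symm hslope)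
    · exact (hwe.1.trans_le hwg.2).ne (congrArg Prod.fst hge)
  · have hg_mem : g.1.1 ∈ Set.Ioo e.1.1 e.2.1 := ⟨hgt, hwg.1.trans_lt hwe.2⟩
    have hne := hG.lineHeight_ne he hg heg_ne hg_mem ⟨le_rfl, hwg.1.trans hwg.2⟩
    obtain ⟨heg, hgf⟩ := hbetween g.1.1 ⟨hgt.le, hwg.1⟩ le_rfl
    rw [lineHeight_left] at heg hgf hne
    refine (hw_min g.1 (hG.left_mem g hg)
      ⟨hg_mem, hwg.1.trans hwf, heg.lt_of_ne hne, hgf⟩).not_gt ?_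
    refine Prod.Lex.toLex_lt_toLex'.2 ⟨hwg.1, fun heq => ?_⟩
    rwa [← lineHeight_left g, heq]

lemma exists_isDirectlyBelow (hG : IsPlaneGraph V E) (he : e ∈ E)
    (hleft : ∃ f ∈ E, f.1 = e.1 ∧ edgeSlope e < edgeSlope f)
    (hright : ∃ g ∈ E, g.2 = e.2 ∧ edgeSlope g < edgeSlope e) :
    ∃ w ∈ V, IsDirectlyBelow E e w := by
  classical
  obtain ⟨g, hg, hge, hgslope⟩ := hright
  obtain ⟨f, hf, hf_min⟩ := {f ∈ E | f.1 = e.1 ∧ edgeSlope e < edgeSlope f}.exists_min_image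
    edgeSlope (hleft.imp fun _ h => Finset.mem_filter.2 h)
  simp only [Finset.mem_filter] at hf hf_min
  obtain ⟨hf, hfe, hfslope⟩ := hf
  obtain ⟨w, hw, hw_min⟩ := {w ∈ V | IsBetween e f w}.exists_min_image toLex
    ((hG.exists_isBetween he hf hg hfe hfslope hge hgslope).imp fun _ h => Finset.mem_filter.2 h)
  simp only [Finset.mem_filter] at hw hw_min
  exact ⟨w, hw.1, hG.isDirectlyBelow_of_isBetween he hf hfe
    (fun g hg hge h => hf_min g ⟨hg, hge, h⟩) hw.2 fun w' hw' h => hw_min w' ⟨hw', h⟩⟩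

lemma eq_of_isDirectlyBelow (hG : IsPlaneGraph V E) (he : e ∈ E) (hf : f ∈ E) {w : ℝ × ℝ}
    (hew : IsDirectlyBelow E e w) (hfw : IsDirectlyBelow E f w) : e = f := by
  by_contra hne
  have hwe := Set.Ioo_subset_Icc_self hew.1
  have hwf := Set.Ioo_subset_Icc_self hfw.1
  rcases (hG.lineHeight_ne he hf hne hew.1 hwf).lt_or_gt with h | h
  · exact (hew.2.2 f hf hwf h).not_gt hfw.2.1
  · exact (hfw.2.2 e he hwe h).not_gt hew.2.1

/-- Each edge is charged to its left endpoint if it is the steepest edge leaving it, to its right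
endpoint if it is the least steep edge entering it, and otherwise to a vertex directly above it. -/
theorem card_le (hG : IsPlaneGraph V E) : E.card ≤ 3 * V.card := by
  classical
  let steepest := {e ∈ E | ∀ f ∈ E, f.1 = e.1 → edgeSlope f ≤ edgeSlope e}
  let flattest := {e ∈ E | ∀ f ∈ E, f.2 = e.2 → edgeSlope e ≤ edgeSlope f}
  let belowVertex := {e ∈ E | ∃ w ∈ V, IsDirectlyBelow E e w}
  have hsteepest : steepest.card ≤ V.card := by
    refine Finset.card_le_card_of_injOn Prod.fst
      (fun e he => hG.left_mem e (Finset.mem_filter.1 he).1) fun e he f hf hef => ?_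
    obtain ⟨he, he_max⟩ := Finset.mem_filter.1 he
    obtain ⟨hf, hf_max⟩ := Finset.mem_filter.1 hf
    exact hG.eq_of_left_eq_of_slope_eq he hf hef
      ((hf_max e he hef).antisymm (he_max f hf hef.symm))
  have hflattest : flattest.card ≤ V.card := by
    refine Finset.card_le_card_of_injOn Prod.snd
      (fun e he => hG.right_mem e (Finset.mem_filter.1 he).1) fun e he f hf hef => ?_
    obtain ⟨he, he_min⟩ := Finset.mem_filter.1 he
    obtain ⟨hf, hf_min⟩ := Finset.mem_filter.1 hf
    exact hG.eq_of_right_eq_of_slope_eq he hf hef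
      ((he_min f hf hef.symm).antisymm (hf_min e he hef))
  have hbelow : belowVertex.card ≤ V.card :=
    Finset.card_le_card_of_forall_subsingleton (IsDirectlyBelow E)
      (fun e he => (Finset.mem_filter.1 he).2) fun w _ e he f hf =>
        hG.eq_of_isDirectlyBelow (Finset.mem_filter.1 he.1).1 (Finset.mem_filter.1 hf.1).1 he.2 hf.2
  have hcover : E ⊆ steepest ∪ flattest ∪ belowVertex := by
    intro e he
    by_contra! hnot
    simp only [steepest, flattest, belowVertex, Finset.mem_union, Finset.mem_filter, he, true_and,
      not_or, not_forall, not_le, exists_prop] at hnot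
    exact hnot.2 (hG.exists_isDirectlyBelow he hnot.1.1 hnot.1.2)
  calc E.card ≤ (steepest ∪ flattest ∪ belowVertex).card := Finset.card_le_card hcover
    _ ≤ steepest.card + flattest.card + belowVertex.card :=
      (Finset.card_union_le _ _).trans (Nat.add_le_add_right (Finset.card_union_le _ _) _)
    _ ≤ 3 * V.card := by omega

end IsPlaneGraph

/-! ### Links of vertices and the upper bound -/

section GenericProjection

variable {𝕜 E : Type*} [Field 𝕜] [AddCommGroup E] [Module 𝕜 E]

lemma exists_linearMap_prod_disjoint_ker (hE : Module.finrank 𝕜 E = 3) {ℓ : E →ₗ[𝕜] 𝕜}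
    (hℓ : ℓ ≠ 0) : ∃ M : E →ₗ[𝕜] 𝕜 × 𝕜, Disjoint (LinearMap.ker ℓ) (LinearMap.ker M) := by
  have : FiniteDimensional 𝕜 E := Module.finite_of_finrank_pos (by omega)
  have hker : Module.finrank 𝕜 (LinearMap.ker ℓ) = Module.finrank 𝕜 (𝕜 × 𝕜) := by
    have := Module.Dual.finrank_ker_add_one_of_ne_zero hℓ
    rw [Module.finrank_prod, Module.finrank_self]
    omega
  obtain ⟨M, hM⟩ := LinearMap.exists_extend (LinearEquiv.ofFinrankEq _ _ hker).toLinearMap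
  refine ⟨M, LinearMap.disjoint_ker.2 fun x hx hMx => ?_⟩
  have hx0 : LinearEquiv.ofFinrankEq _ _ hker ⟨x, hx⟩ = 0 := by
    rw [← hMx]
    exact (LinearMap.congr_fun hM ⟨x, hx⟩).symm
  exact congrArg Subtype.val ((LinearEquiv.map_eq_zero_iff _).1 hx0)

/-- A generic shear in the target moves finitely many nonzero vectors off the vertical axis. -/
lemma exists_linearMap_prod_disjoint_ker_fst_ne_zero [Infinite 𝕜] (hE : Module.finrank 𝕜 E = 3)
    {ℓ : E →ₗ[𝕜] 𝕜} (hℓ : ℓ ≠ 0) (D : Finset E) :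
    ∃ M : E →ₗ[𝕜] 𝕜 × 𝕜, Disjoint (LinearMap.ker ℓ) (LinearMap.ker M) ∧
      ∀ d ∈ D, d ≠ 0 → ℓ d = 0 → (M d).1 ≠ 0 := by
  classical
  obtain ⟨M, hM⟩ := exists_linearMap_prod_disjoint_ker hE hℓ
  rw [LinearMap.disjoint_ker] at hM
  obtain ⟨c, hc⟩ := Infinite.exists_notMem_finset (D.image fun d => -(M d).1 / (M d).2)
  refine ⟨((LinearMap.fst 𝕜 𝕜 𝕜 + c • LinearMap.snd 𝕜 𝕜 𝕜).prod (LinearMap.snd 𝕜 𝕜 𝕜)) ∘ₗ M,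
    LinearMap.disjoint_ker.2 fun x hx hMx => hM x hx ?_, fun d hd hd0 hℓd hzero => ?_⟩
  · have hsnd : (M x).2 = 0 := congrArg Prod.snd hMx
    have hfst : (M x).1 + c * (M x).2 = 0 := congrArg Prod.fst hMx
    exact Prod.ext (by simpa [hsnd] using hfst) hsnd
  · replace hzero : (M d).1 + c * (M d).2 = 0 := hzero
    by_cases hsnd : (M d).2 = 0
    · exact hd0 (hM d hℓd (Prod.ext (by simpa [hsnd] using hzero) hsnd))
    · refine hc (Finset.mem_image.2 ⟨d, hd, ?_⟩)
      rw [div_eq_iff hsnd]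
      linear_combination -hzero

lemma exists_dual_injOn [Infinite 𝕜] (S : Finset E) : ∃ ℓ : E →ₗ[𝕜] 𝕜, Set.InjOn ℓ S := by
  obtain ⟨ℓ, hℓ⟩ := Module.exists_dual_forall_apply_ne_zero (K := 𝕜)
    (fun q : {q : S × S // q.1 ≠ q.2} => (q.1.1 - q.1.2 : E))
    fun q => sub_ne_zero.2 (Subtype.coe_injective.ne q.2)
  refine ⟨ℓ, fun a ha b hb hab => ?_⟩
  by_contra hne
  exact hℓ ⟨(⟨a, ha⟩, ⟨b, hb⟩), fun h => hne (congrArg Subtype.val h)⟩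
    (by rw [map_sub, hab, sub_self])

end GenericProjection

/-- The central projection from `v` onto the plane `ℓ = 1`, after translating `v` to the origin.
It represents the vertex `p` in the link of `v`; the value is `0` if `ℓ p = ℓ v`. -/
def linkPoint {E : Type*} [AddCommGroup E] [Module ℝ E] (ℓ : E →ₗ[ℝ] ℝ) (v p : E) : E :=
  (ℓ (p - v))⁻¹ • (p - v)

section LinkPoint

open Filter Topology

variable {E : Type*} [AddCommGroup E] [Module ℝ E] {ℓ : E →ₗ[ℝ] ℝ} {v a b x : E}

lemma map_linkPoint (ha : ℓ v < ℓ a) : ℓ (linkPoint ℓ v a) = 1 := by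
  have : ℓ (a - v) ≠ 0 := by rw [map_sub]; exact (sub_pos.2 ha).ne'
  rw [linkPoint, map_smul, smul_eq_mul, inv_mul_cancel₀ this]

lemma map_eq_one_of_mem_segment_linkPoint (ha : ℓ v < ℓ a) (hb : ℓ v < ℓ b)
    (hx : x ∈ segment ℝ (linkPoint ℓ v a) (linkPoint ℓ v b)) : ℓ x = 1 := by
  have hmem := Set.mem_image_of_mem ℓ hx
  rwa [← ℓ.coe_toAffineMap, image_segment, ℓ.coe_toAffineMap, map_linkPoint ha, map_linkPoint hb,
    segment_same] at hmem

lemma convex_setOf_eventually_add_smul_mem {C : Set E} (hC : Convex ℝ C) (v : E) :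
    Convex ℝ {x | ∀ᶠ ε in 𝓝[>] (0 : ℝ), v + ε • x ∈ C} := by
  intro x hx y hy α β hα hβ hαβ
  rw [Set.mem_ofPred_eq] at hx hy ⊢
  filter_upwards [hx, hy] with ε hεx hεy
  convert hC hεx hεy hα hβ hαβ using 1
  obtain rfl := eq_sub_of_add_eq hαβ
  module

lemma eventually_add_smul_linkPoint_mem {C : Set E} (hC : Convex ℝ C) (hvC : v ∈ C) (haC : a ∈ C)
    (ha : ℓ v < ℓ a) : ∀ᶠ ε in 𝓝[>] (0 : ℝ), v + ε • linkPoint ℓ v a ∈ C := by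
  have hpos : 0 < ℓ (a - v) := by rw [map_sub]; exact sub_pos.2 ha
  filter_upwards [Ioo_mem_nhdsGT hpos] with ε hε
  rw [linkPoint, smul_smul, ← div_eq_mul_inv]
  exact hC.add_smul_sub_mem hvC haC
    ⟨div_nonneg hε.1.le hpos.le, (div_le_one hpos).2 hε.2.le⟩

lemma eventually_add_smul_mem_of_mem_segment_linkPoint {C : Set E} (hC : Convex ℝ C) (hvC : v ∈ C)
    (haC : a ∈ C) (hbC : b ∈ C) (ha : ℓ v < ℓ a) (hb : ℓ v < ℓ b)
    (hx : x ∈ segment ℝ (linkPoint ℓ v a) (linkPoint ℓ v b)) :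
    ∀ᶠ ε in 𝓝[>] (0 : ℝ), v + ε • x ∈ C :=
  (convex_setOf_eventually_add_smul_mem hC v).segment_subset
    (eventually_add_smul_linkPoint_mem hC hvC haC ha)
    (eventually_add_smul_linkPoint_mem hC hvC hbC hb) hx

lemma eq_linkPoint_of_add_smul_mem_segment (hx : ℓ x = 1) {ε : ℝ} (hε : ε ≠ 0)
    (h : v + ε • x ∈ segment ℝ v a) : x = linkPoint ℓ v a := by
  rw [segment_eq_image'] at h
  obtain ⟨θ, -, hθ⟩ := h
  have hray : θ • (a - v) = ε • x := add_left_cancel hθ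
  have hθε : θ * ℓ (a - v) = ε := by simpa [hx] using congrArg ℓ hray
  have hℓ : ℓ (a - v) ≠ 0 := right_ne_zero_of_mul (hθε ▸ hε)
  rw [linkPoint, eq_inv_smul_iff₀ hℓ, ← smul_right_inj (left_ne_zero_of_mul (hθε ▸ hε)), hray,
    smul_smul, hθε]

lemma linkPoint_ne_of_not_collinear (ha : ℓ v < ℓ a) (hb : ℓ v < ℓ b)
    (h : ¬ Collinear ℝ {v, a, b}) : linkPoint ℓ v a ≠ linkPoint ℓ v b := by
  have hmem : ∀ {p : E}, ℓ v < ℓ p → p = ℓ (p - v) • linkPoint ℓ v p +ᵥ v := by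
    intro p hp
    have : ℓ (p - v) ≠ 0 := by rw [map_sub]; exact (sub_pos.2 hp).ne'
    rw [linkPoint, smul_inv_smul₀ this, vadd_eq_add, sub_add_cancel]
  intro heq
  refine h ((collinear_iff_of_mem (p₀ := v) (by simp)).2 ⟨linkPoint ℓ v a, ?_⟩)
  rintro p (rfl | rfl | rfl)
  · exact ⟨0, by simp⟩
  · exact ⟨_, hmem ha⟩
  · exact ⟨_, heq ▸ hmem hb⟩

lemma eq_left_or_eq_right_of_mem_segment {p q : E} (h : v ∈ segment ℝ p q)
    (hp : p ≠ v → ℓ v < ℓ p) (hq : q ≠ v → ℓ v < ℓ q) : p = v ∨ q = v := by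
  by_contra! hne
  have hmem := Set.mem_image_of_mem ℓ h
  rw [← ℓ.coe_toAffineMap, image_segment, ℓ.coe_toAffineMap, segment_eq_uIcc, Set.uIcc] at hmem
  exact (lt_min (hp hne.1) (hq hne.2)).not_ge hmem.1

end LinkPoint

/-- A family of triangles on `S` of the kind counted by `f2`: any two of them have disjoint convex
hulls or meet in a common vertex or a common edge. -/
structure IsTriangleFamily (S : Finset E3) (T : Finset (Finset E3)) : Prop where
  isTriangleOn : ∀ t ∈ T, IsTriangleOn S t
  vertexEdgeIntersect : ∀ t₁ ∈ T, ∀ t₂ ∈ T, t₁ ≠ t₂ → VertexEdgeIntersect t₁ t₂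

lemma isTriangleOn_iff_not_collinear {S t : Finset E3} :
    IsTriangleOn S t ↔ t ⊆ S ∧ t.card = 3 ∧ ¬ Collinear ℝ (t : Set E3) := by
  refine and_congr_right fun _ => and_congr_right fun hcard => ?_
  rw [affineIndependent_iff_not_finrank_vectorSpan_le ℝ _ (n := 1) (by simpa using hcard),
    Subtype.range_coe, collinear_iff_finrank_le_one]

/-- `v` is the unique vertex of `τ` at which `ℓ` is smallest. -/
def IsLowestVertex (ℓ : E3 →ₗ[ℝ] ℝ) (τ : Finset E3) (v : E3) : Prop :=
  v ∈ τ ∧ ∀ w ∈ τ, w ≠ v → ℓ v < ℓ w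

/-- The edge opposite to `v` in the triangle `τ = {v, a, b}`, seen from `v`: the planar image under
`M` of its central projection from `v`. The endpoints can be listed in either order. -/
def IsLinkEdge (ℓ : E3 →ₗ[ℝ] ℝ) (M : E3 →ₗ[ℝ] ℝ × ℝ) (v : E3) (τ : Finset E3) (e : PlaneEdge) :
    Prop :=
  ∃ a b, (τ : Set E3) = {v, a, b} ∧ ℓ v < ℓ a ∧ ℓ v < ℓ b ∧
    e = (M (linkPoint ℓ v a), M (linkPoint ℓ v b))

section Link

variable {ℓ : E3 →ₗ[ℝ] ℝ} {M : E3 →ₗ[ℝ] ℝ × ℝ} {v : E3} {S τ τ' : Finset E3}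

lemma isLowestVertex_of_coe_eq {a b : E3} (hτ : (τ : Set E3) = {v, a, b}) (ha : ℓ v < ℓ a)
    (hb : ℓ v < ℓ b) : IsLowestVertex ℓ τ v := by
  simp_rw [IsLowestVertex, ← Finset.mem_coe, hτ]
  exact ⟨Or.inl rfl, by rintro w (rfl | rfl | rfl) <;> simp [ha, hb]⟩

lemma VertexEdgeIntersect.exists_mem_segment (h : VertexEdgeIntersect τ τ')
    (hv : IsLowestVertex ℓ τ v) (hv' : v ∈ τ') {z : E3}
    (hz : z ∈ convexHull ℝ (τ : Set E3) ∩ convexHull ℝ (τ' : Set E3)) (hzv : z ≠ v) :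
    ∃ q ∈ τ, q ∈ τ' ∧ q ≠ v ∧ z ∈ segment ℝ v q := by
  have hv_mem : v ∈ convexHull ℝ (τ : Set E3) ∩ convexHull ℝ (τ' : Set E3) :=
    ⟨subset_convexHull _ _ hv.1, subset_convexHull _ _ hv'⟩
  rcases h with h | ⟨w, -, -, h⟩ | ⟨p, q, hpq, hp, hq, hp', hq', h⟩ <;> rw [h] at hz hv_mem
  · exact hz.elim
  · exact (hzv (hz.trans hv_mem.symm)).elim
  · rcases eq_left_or_eq_right_of_mem_segment hv_mem (hv.2 p hp) (hv.2 q hq) with rfl | rfl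
    · exact ⟨q, hq, hq', hpq.symm, hz⟩
    · exact ⟨p, hp, hp', hpq, segment_symm ℝ p q ▸ hz⟩

/-- A common point `x` of two link edges yields common points `v + ε • x` of the two triangles,
which must therefore lie on an edge from `v` to a common vertex. -/
lemma VertexEdgeIntersect.segment_linkPoint_inter_subset (h : VertexEdgeIntersect τ τ')
    {a b a' b' : E3} (hτ : (τ : Set E3) = {v, a, b}) (hτ' : (τ' : Set E3) = {v, a', b'})
    (ha : ℓ v < ℓ a) (hb : ℓ v < ℓ b) (ha' : ℓ v < ℓ a') (hb' : ℓ v < ℓ b') :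
    segment ℝ (linkPoint ℓ v a) (linkPoint ℓ v b) ∩ segment ℝ (linkPoint ℓ v a') (linkPoint ℓ v b')
      ⊆ {linkPoint ℓ v a, linkPoint ℓ v b} ∩ {linkPoint ℓ v a', linkPoint ℓ v b'} := by
  rintro x ⟨hx, hx'⟩
  have hx1 : ℓ x = 1 := map_eq_one_of_mem_segment_linkPoint ha hb hx
  have hsub : {v, a, b} ⊆ convexHull ℝ (τ : Set E3) := hτ ▸ subset_convexHull ℝ _
  have hsub' : {v, a', b'} ⊆ convexHull ℝ (τ' : Set E3) := hτ' ▸ subset_convexHull ℝ _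
  obtain ⟨ε, ⟨hz, hz'⟩, hε⟩ :=
    ((eventually_add_smul_mem_of_mem_segment_linkPoint (convex_convexHull ℝ _)
      (hsub (by simp)) (hsub (by simp)) (hsub (by simp)) ha hb hx).and
    (eventually_add_smul_mem_of_mem_segment_linkPoint (convex_convexHull ℝ _)
      (hsub' (by simp)) (hsub' (by simp)) (hsub' (by simp)) ha' hb' hx')).and
    self_mem_nhdsWithin |>.exists
  have hε0 : ε ≠ 0 := ne_of_gt hε
  have hzv : v + ε • x ≠ v := fun heq => hε0 <| by
    simpa [hx1] using congrArg ℓ (add_eq_left.1 heq)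
  obtain ⟨q, hq, hq', hqv, hseg⟩ := h.exists_mem_segment (isLowestVertex_of_coe_eq hτ ha hb)
    (isLowestVertex_of_coe_eq hτ' ha' hb').1 ⟨hz, hz'⟩ hzv
  rw [← Finset.mem_coe, hτ] at hq
  rw [← Finset.mem_coe, hτ'] at hq'
  rw [eq_linkPoint_of_add_smul_mem_segment hx1 hε0 hseg]
  exact ⟨(hq.resolve_left hqv).imp (congrArg _) (congrArg _),
    (hq'.resolve_left hqv).imp (congrArg _) (congrArg _)⟩

lemma IsLowestVertex.exists_coe_eq (hv : IsLowestVertex ℓ τ v) (hcard : τ.card = 3) :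
    ∃ a b, (τ : Set E3) = {v, a, b} ∧ ℓ v < ℓ a ∧ ℓ v < ℓ b := by
  classical
  obtain ⟨a, b, -, hab⟩ := Finset.card_eq_two.1
    (by rw [Finset.card_erase_of_mem hv.1, hcard] : (τ.erase v).card = 2)
  have hlt : ∀ w ∈ τ.erase v, ℓ v < ℓ w := fun w hw =>
    hv.2 w (Finset.mem_of_mem_erase hw) (Finset.ne_of_mem_erase hw)
  refine ⟨a, b, ?_, hlt a (by simp [hab]), hlt b (by simp [hab])⟩
  rw [← Finset.insert_erase hv.1, hab]
  simp

lemma IsLinkEdge.swap {e : PlaneEdge} (he : IsLinkEdge ℓ M v τ e) :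
    IsLinkEdge ℓ M v τ e.swap := by
  obtain ⟨a, b, hτ, ha, hb, rfl⟩ := he
  exact ⟨b, a, hτ.trans (congrArg _ (Set.pair_comm a b)), hb, ha, rfl⟩

lemma IsLinkEdge.endpoints_mem [DecidableEq (ℝ × ℝ)] {e : PlaneEdge} (he : IsLinkEdge ℓ M v τ e)
    (hτS : τ ⊆ S) : e.1 ∈ S.image (fun p => M (linkPoint ℓ v p)) ∧
      e.2 ∈ S.image (fun p => M (linkPoint ℓ v p)) := by
  obtain ⟨a, b, hτ, -, -, rfl⟩ := he
  have hsub : {v, a, b} ⊆ (S : Set E3) := hτ ▸ Finset.coe_subset.2 hτS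
  exact ⟨Finset.mem_image_of_mem _ (hsub (by simp)), Finset.mem_image_of_mem _ (hsub (by simp))⟩

lemma IsTriangleOn.exists_isLinkEdge (hτ : IsTriangleOn S τ) (hv : IsLowestVertex ℓ τ v)
    (hM : ∀ a ∈ S, ∀ b ∈ S, ℓ v < ℓ a → ℓ v < ℓ b → linkPoint ℓ v a ≠ linkPoint ℓ v b →
      (M (linkPoint ℓ v a)).1 ≠ (M (linkPoint ℓ v b)).1) :
    ∃ e, IsLinkEdge ℓ M v τ e ∧ e.1.1 < e.2.1 := by
  obtain ⟨hτS, hcard, hcol⟩ := isTriangleOn_iff_not_collinear.1 hτ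
  obtain ⟨a, b, hab, ha, hb⟩ := hv.exists_coe_eq hcard
  have hsub : {v, a, b} ⊆ (S : Set E3) := hab ▸ Finset.coe_subset.2 hτS
  have he : IsLinkEdge ℓ M v τ _ := ⟨a, b, hab, ha, hb, rfl⟩
  rcases (hM a (hsub (by simp)) b (hsub (by simp)) ha hb
    (linkPoint_ne_of_not_collinear ha hb (hab ▸ hcol))).lt_or_gt with hlt | hgt
  · exact ⟨_, he, hlt⟩
  · exact ⟨_, he.swap, hgt⟩

lemma VertexEdgeIntersect.segment_inter_subset_of_isLinkEdge (h : VertexEdgeIntersect τ τ')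
    (hM : Disjoint (LinearMap.ker ℓ) (LinearMap.ker M)) {e f : PlaneEdge}
    (he : IsLinkEdge ℓ M v τ e) (hf : IsLinkEdge ℓ M v τ' f) :
    segment ℝ e.1 e.2 ∩ segment ℝ f.1 f.2 ⊆ {e.1, e.2} ∩ {f.1, f.2} := by
  obtain ⟨a, b, hτ, ha, hb, rfl⟩ := he
  obtain ⟨a', b', hτ', ha', hb', rfl⟩ := hf
  have hinj : Set.InjOn M {x | ℓ x = 1} := fun x hx y hy hxy => sub_eq_zero.1 <|
    LinearMap.disjoint_ker.1 hM _ (by rw [LinearMap.mem_ker, map_sub, hx, hy, sub_self])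
      (by rw [map_sub, hxy, sub_self])
  have himage : ∀ p q, M '' segment ℝ p q = segment ℝ (M p) (M q) := fun p q => by
    rw [← M.coe_toAffineMap, image_segment, M.coe_toAffineMap]
  rw [← himage, ← himage, ← hinj.image_inter
    (fun x => map_eq_one_of_mem_segment_linkPoint ha hb)
    (fun x => map_eq_one_of_mem_segment_linkPoint ha' hb')]
  refine (Set.image_mono (h.segment_linkPoint_inter_subset hτ hτ' ha hb ha' hb')).trans
    ((Set.image_inter_subset _ _ _).trans_eq ?_)
  simp only [Set.image_pair]

end Link

section Counting

variable {ℓ : E3 →ₗ[ℝ] ℝ} {S : Finset E3} {T : Finset (Finset E3)}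

lemma exists_linearMap_fst_linkPoint_ne (S : Finset E3) (hℓ : ℓ ≠ 0) (v : E3) :
    ∃ M : E3 →ₗ[ℝ] ℝ × ℝ, Disjoint (LinearMap.ker ℓ) (LinearMap.ker M) ∧
      ∀ a ∈ S, ∀ b ∈ S, ℓ v < ℓ a → ℓ v < ℓ b → linkPoint ℓ v a ≠ linkPoint ℓ v b →
        (M (linkPoint ℓ v a)).1 ≠ (M (linkPoint ℓ v b)).1 := by
  classical
  obtain ⟨M, hker, hM⟩ := exists_linearMap_prod_disjoint_ker_fst_ne_zero (by simp) hℓ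
    ((S ×ˢ S).image fun q => linkPoint ℓ v q.1 - linkPoint ℓ v q.2)
  refine ⟨M, hker, fun a ha b hb hva hvb hne heq => ?_⟩
  exact hM _ (Finset.mem_image.2 ⟨(a, b), Finset.mk_mem_product ha hb, rfl⟩) (sub_ne_zero.2 hne)
    (by rw [map_sub, map_linkPoint hva, map_linkPoint hvb, sub_self])
    (by rw [map_sub, Prod.fst_sub, heq, sub_self])

lemma not_segment_subset_pair {E : Type*} [AddCommGroup E] [Module ℝ E] {p q : E} (h : p ≠ q) :
    ¬ segment ℝ p q ⊆ {p, q} := fun hsub => by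
  rcases hsub (midpoint_mem_segment p q) with hm | hm
  · exact h ((midpoint_eq_left_iff ℝ).1 hm)
  · exact h ((midpoint_eq_right_iff ℝ).1 hm)

open Classical in
/-- The triangles of `T` whose lowest vertex is `v`. -/
def lowerStar (ℓ : E3 →ₗ[ℝ] ℝ) (T : Finset (Finset E3)) (v : E3) : Finset (Finset E3) :=
  {τ ∈ T | IsLowestVertex ℓ τ v}

lemma mem_lowerStar {v : E3} {τ : Finset E3} :
    τ ∈ lowerStar ℓ T v ↔ τ ∈ T ∧ IsLowestVertex ℓ τ v := by
  classical
  exact Finset.mem_filter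

namespace IsTriangleFamily

lemma exists_isPlaneGraph_card_eq (hT : IsTriangleFamily S T) (hℓ : ℓ ≠ 0) (v : E3) :
    ∃ V E, IsPlaneGraph V E ∧ V.card ≤ S.card ∧ E.card = (lowerStar ℓ T v).card := by
  classical
  obtain ⟨M, hker, hM⟩ := exists_linearMap_fst_linkPoint_ne S hℓ v
  have hstar : ∀ τ ∈ lowerStar ℓ T v, τ ∈ T ∧ IsLowestVertex ℓ τ v := fun τ => mem_lowerStar.1
  choose! edge hedge hlt using fun τ hτ =>
    (hT.isTriangleOn τ (hstar τ hτ).1).exists_isLinkEdge (hstar τ hτ).2 hM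
  have hinter : ∀ τ ∈ lowerStar ℓ T v, ∀ τ' ∈ lowerStar ℓ T v, τ ≠ τ' →
      segment ℝ (edge τ).1 (edge τ).2 ∩ segment ℝ (edge τ').1 (edge τ').2 ⊆
        {(edge τ).1, (edge τ).2} ∩ {(edge τ').1, (edge τ').2} := fun τ hτ τ' hτ' hne =>
    (hT.vertexEdgeIntersect τ (hstar τ hτ).1 τ' (hstar τ' hτ').1 hne
      ).segment_inter_subset_of_isLinkEdge hker (hedge τ hτ) (hedge τ' hτ')
  have hinj : Set.InjOn edge (lowerStar ℓ T v) := fun τ hτ τ' hτ' heq => by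
    by_contra hne
    have hsub := hinter τ hτ τ' hτ' hne
    rw [← heq, Set.inter_self, Set.inter_self] at hsub
    exact not_segment_subset_pair (fun h => (hlt τ hτ).ne (congrArg Prod.fst h)) hsub
  have hsub : ∀ τ ∈ lowerStar ℓ T v, τ ⊆ S := fun τ hτ => (hT.isTriangleOn τ (hstar τ hτ).1).1
  refine ⟨S.image fun p => M (linkPoint ℓ v p), (lowerStar ℓ T v).image edge, ⟨?_, ?_, ?_, ?_⟩,
    Finset.card_image_le, Finset.card_image_of_injOn hinj⟩ <;> simp only [Finset.forall_mem_image]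
  · exact fun τ hτ => ((hedge τ hτ).endpoints_mem (hsub τ hτ)).1
  · exact fun τ hτ => ((hedge τ hτ).endpoints_mem (hsub τ hτ)).2
  · exact hlt
  · exact fun τ hτ τ' hτ' hne => hinter τ hτ τ' hτ' fun h => hne (congrArg edge h)

lemma card_lowerStar_le (hT : IsTriangleFamily S T) (ℓ : E3 →ₗ[ℝ] ℝ) (v : E3) :
    (lowerStar ℓ T v).card ≤ 3 * S.card := by
  rcases (lowerStar ℓ T v).eq_empty_or_nonempty with hempty | ⟨τ, hτ⟩
  · simp [hempty]
  · obtain ⟨hτT, hv⟩ := mem_lowerStar.1 hτ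
    obtain ⟨a, -, -, ha, -⟩ := hv.exists_coe_eq (hT.isTriangleOn τ hτT).2.1
    have hℓ : ℓ ≠ 0 := by
      rintro rfl
      exact lt_irrefl _ ha
    obtain ⟨V, E, hG, hV, hE⟩ := hT.exists_isPlaneGraph_card_eq hℓ v
    exact hE ▸ hG.card_le.trans (Nat.mul_le_mul_left 3 hV)

theorem card_le (hT : IsTriangleFamily S T) : T.card ≤ 3 * S.card ^ 2 := by
  classical
  obtain ⟨ℓ, hℓ⟩ := exists_dual_injOn (𝕜 := ℝ) S
  have hcover : T ⊆ S.biUnion (lowerStar ℓ T) := by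
    intro τ hτ
    obtain ⟨hτS, hcard, -⟩ := hT.isTriangleOn τ hτ
    obtain ⟨v, hv, hmin⟩ := τ.exists_min_image ℓ (Finset.card_pos.1 (by omega))
    refine Finset.mem_biUnion.2 ⟨v, hτS hv, mem_lowerStar.2 ⟨hτ, hv, fun w hw hwv => ?_⟩⟩
    exact (hmin w hw).lt_of_ne fun h => hwv (hℓ (hτS hw) (hτS hv) h.symm)
  calc T.card ≤ (S.biUnion (lowerStar ℓ T)).card := Finset.card_le_card hcover
    _ ≤ S.card * (3 * S.card) := Finset.card_biUnion_le_card_mul _ _ _ fun v _ =>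
      hT.card_lowerStar_le ℓ v
    _ = 3 * S.card ^ 2 := by ring

end IsTriangleFamily

end Counting

/-! ### The grid of triangles between two skew lines -/

section Grid

lemma VertexEdgeIntersect.symm {t₁ t₂ : Finset E3} (h : VertexEdgeIntersect t₁ t₂) :
    VertexEdgeIntersect t₂ t₁ := by
  rw [VertexEdgeIntersect, Set.inter_comm]
  rcases h with h | ⟨v, hv₁, hv₂, h⟩ | ⟨a, b, hab, ha₁, hb₁, ha₂, hb₂, h⟩
  · exact Or.inl h
  · exact Or.inr (Or.inl ⟨v, hv₂, hv₁, h⟩)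
  · exact Or.inr (Or.inr ⟨a, b, hab, ha₂, hb₂, ha₁, hb₁, h⟩)

lemma vertexEdgeIntersect_of_inter_subset_singleton {t₁ t₂ : Finset E3} {v : E3} (hv₁ : v ∈ t₁)
    (hv₂ : v ∈ t₂)
    (h : convexHull ℝ (t₁ : Set E3) ∩ convexHull ℝ (t₂ : Set E3) ⊆ {v}) :
    VertexEdgeIntersect t₁ t₂ :=
  Or.inr <| Or.inl ⟨v, hv₁, hv₂, h.antisymm <| Set.singleton_subset_iff.2
    ⟨subset_convexHull ℝ _ hv₁, subset_convexHull ℝ _ hv₂⟩⟩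

lemma vertexEdgeIntersect_of_inter_subset_segment {t₁ t₂ : Finset E3} {a b : E3} (hab : a ≠ b)
    (ha₁ : a ∈ t₁) (hb₁ : b ∈ t₁) (ha₂ : a ∈ t₂) (hb₂ : b ∈ t₂)
    (h : convexHull ℝ (t₁ : Set E3) ∩ convexHull ℝ (t₂ : Set E3) ⊆ segment ℝ a b) :
    VertexEdgeIntersect t₁ t₂ :=
  Or.inr <| Or.inr ⟨a, b, hab, ha₁, hb₁, ha₂, hb₂, h.antisymm <| Set.subset_inter
    (segment_subset_convexHull ha₁ hb₁) (segment_subset_convexHull ha₂ hb₂)⟩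

/-- The points with parameter `i` on the first of two skew lines; consecutive ones span the bases
of the triangles of the construction. -/
def basePoint (i : ℕ) : E3 := !₂[(i : ℝ), 0, 0]

/-- The points with parameter `j` on the second of two skew lines; they are the apices of the
triangles of the construction. -/
def apexPoint (j : ℕ) : E3 := !₂[0, (j : ℝ), 1]

open Classical in
/-- The triangle joining the `i`-th unit interval of the first line to the `j`-th point of the
second line. -/
def gridTriangle (i j : ℕ) : Finset E3 := {basePoint i, basePoint (i + 1), apexPoint j}

variable {i i' j j' : ℕ} {p : E3}

lemma basePoint_injective : Function.Injective basePoint := fun i i' h => by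
  simpa [basePoint] using congrArg (fun p : E3 => p 0) h

lemma apexPoint_injective : Function.Injective apexPoint := fun j j' h => by
  simpa [apexPoint] using congrArg (fun p : E3 => p 1) h

lemma basePoint_ne_apexPoint (i j : ℕ) : basePoint i ≠ apexPoint j := fun h => by
  simpa [basePoint, apexPoint] using congrArg (fun p : E3 => p 2) h

lemma basePoint_ne_basePoint_succ (i : ℕ) : basePoint i ≠ basePoint (i + 1) :=
  basePoint_injective.ne i.succ_ne_self.symm

lemma mem_gridTriangle :
    p ∈ gridTriangle i j ↔ p = basePoint i ∨ p = basePoint (i + 1) ∨ p = apexPoint j := by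
  simp [gridTriangle]

lemma basePoint_mem_gridTriangle : basePoint i ∈ gridTriangle i' j' ↔ i = i' ∨ i = i' + 1 := by
  simp [mem_gridTriangle, basePoint_injective.eq_iff, basePoint_ne_apexPoint]

lemma apexPoint_mem_gridTriangle : apexPoint j ∈ gridTriangle i' j' ↔ j = j' := by
  simp [mem_gridTriangle, apexPoint_injective.eq_iff, (basePoint_ne_apexPoint _ _).symm]

lemma gridTriangle_injective : Function.Injective fun q : ℕ × ℕ => gridTriangle q.1 q.2 := by
  rintro ⟨i, j⟩ ⟨i', j'⟩ (h : gridTriangle i j = gridTriangle i' j')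
  have hj : j = j' := apexPoint_mem_gridTriangle.1 (h ▸ apexPoint_mem_gridTriangle.2 rfl)
  have hi : i = i' ∨ i = i' + 1 :=
    basePoint_mem_gridTriangle.1 (h ▸ basePoint_mem_gridTriangle.2 (Or.inl rfl))
  have hi_succ : i + 1 = i' ∨ i + 1 = i' + 1 :=
    basePoint_mem_gridTriangle.1 (h ▸ basePoint_mem_gridTriangle.2 (Or.inr rfl))
  exact Prod.ext (by lia) hj

lemma card_gridTriangle (i j : ℕ) : (gridTriangle i j).card = 3 :=
  Finset.card_eq_three.2 ⟨_, _, _, basePoint_ne_basePoint_succ i, basePoint_ne_apexPoint i j,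
    basePoint_ne_apexPoint (i + 1) j, by simp [gridTriangle]⟩

lemma not_collinear_gridTriangle (i j : ℕ) : ¬ Collinear ℝ (gridTriangle i j : Set E3) := by
  rw [collinear_iff_of_mem (p₀ := basePoint i) (basePoint_mem_gridTriangle.2 (Or.inl rfl))]
  rintro ⟨d, hd⟩
  obtain ⟨r, hr⟩ := hd (basePoint (i + 1)) (basePoint_mem_gridTriangle.2 (Or.inr rfl))
  obtain ⟨s, hs⟩ := hd (apexPoint j) (apexPoint_mem_gridTriangle.2 rfl)
  have hr0 : (i : ℝ) + 1 = r * d 0 + i := by simpa [basePoint] using congrArg (fun p : E3 => p 0) hr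
  have hr2 : r = 0 ∨ d 2 = 0 := by simpa [basePoint] using congrArg (fun p : E3 => p 2) hr
  have hs2 : 1 = s * d 2 := by simpa [basePoint, apexPoint] using congrArg (fun p : E3 => p 2) hs
  rcases hr2 with h | h
  · simp [h] at hr0
  · simp [h] at hs2

lemma mem_convexHull_gridTriangle (hp : p ∈ convexHull ℝ (gridTriangle i j : Set E3)) :
    p 1 = j * p 2 ∧ 0 ≤ p 2 ∧ p 2 ≤ 1 ∧ i * (1 - p 2) ≤ p 0 ∧ p 0 ≤ (i + 1) * (1 - p 2) := by
  suffices hsub : convexHull ℝ (gridTriangle i j : Set E3) ⊆ {p : E3 | p 1 = j * p 2 ∧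
      0 ≤ p 2 ∧ p 2 ≤ 1 ∧ i * (1 - p 2) ≤ p 0 ∧ p 0 ≤ (i + 1) * (1 - p 2)} from hsub hp
  refine convexHull_min (fun q hq => ?_) ?_
  · rcases mem_gridTriangle.1 hq with rfl | rfl | rfl <;> simp [basePoint, apexPoint]
  · rintro q ⟨hq1, hq2, hq3, hq4, hq5⟩ r ⟨hr1, hr2, hr3, hr4, hr5⟩ a b ha hb hab
    obtain rfl : b = 1 - a := by linarith
    simp only [Set.mem_ofPred_eq, PiLp.add_apply, PiLp.smul_apply, smul_eq_mul]
    exact ⟨by rw [hq1, hr1]; ring, by positivity, by nlinarith, by nlinarith, by nlinarith⟩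

lemma ext_coordinates {p q : E3} (h0 : p 0 = q 0) (h1 : p 1 = q 1) (h2 : p 2 = q 2) : p = q := by
  ext k
  fin_cases k <;> assumption

lemma vertexEdgeIntersect_gridTriangle_of_lt (j : ℕ) (hi : i < i') :
    VertexEdgeIntersect (gridTriangle i j) (gridTriangle i' j) := by
  obtain rfl | hi := (Nat.succ_le_of_lt hi).eq_or_lt
  · refine vertexEdgeIntersect_of_inter_subset_segment (basePoint_ne_apexPoint (i + 1) j)
      (basePoint_mem_gridTriangle.2 (Or.inr rfl)) (apexPoint_mem_gridTriangle.2 rfl)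
      (basePoint_mem_gridTriangle.2 (Or.inl rfl)) (apexPoint_mem_gridTriangle.2 rfl) ?_
    rintro p ⟨hp, hp'⟩
    obtain ⟨h1, h2_nonneg, h2_le, -, hupper⟩ := mem_convexHull_gridTriangle hp
    obtain ⟨-, -, -, hlower, -⟩ := mem_convexHull_gridTriangle hp'
    push_cast at hlower
    have h0 : p 0 = (i + 1) * (1 - p 2) := hupper.antisymm hlower
    refine ⟨1 - p 2, p 2, by linarith, h2_nonneg, by ring, ext_coordinates ?_ ?_ ?_⟩
    · simp [basePoint, apexPoint, h0, mul_comm]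
    · simp [basePoint, apexPoint, h1, mul_comm]
    · simp [basePoint, apexPoint]
  · refine vertexEdgeIntersect_of_inter_subset_singleton (apexPoint_mem_gridTriangle.2 rfl)
      (apexPoint_mem_gridTriangle.2 rfl) ?_
    rintro p ⟨hp, hp'⟩
    obtain ⟨h1, -, h2_le, hlower, hupper⟩ := mem_convexHull_gridTriangle hp
    obtain ⟨-, -, -, hlower', -⟩ := mem_convexHull_gridTriangle hp'
    have hgap : (i : ℝ) + 2 ≤ i' := by exact_mod_cast hi
    have h2 : p 2 = 1 := by nlinarith
    have h0 : p 0 = 0 := by rw [h2] at hlower hupper; linarith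
    exact ext_coordinates (by simp [apexPoint, h0]) (by simp [apexPoint, h1, h2])
      (by simp [apexPoint, h2])

lemma mem_inter_convexHull_gridTriangle (hj : j ≠ j')
    (hp : p ∈ convexHull ℝ (gridTriangle i j : Set E3) ∩
      convexHull ℝ (gridTriangle i' j' : Set E3)) :
    p 1 = 0 ∧ p 2 = 0 ∧ p 0 ∈ Set.Icc (i : ℝ) (i + 1) ∩ Set.Icc (i' : ℝ) (i' + 1) := by
  obtain ⟨h1, -, -, hlower, hupper⟩ := mem_convexHull_gridTriangle hp.1
  obtain ⟨h1', -, -, hlower', hupper'⟩ := mem_convexHull_gridTriangle hp.2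
  have h2 : p 2 = 0 := by
    have hmul : ((j : ℝ) - j') * p 2 = 0 := by linarith
    exact (mul_eq_zero.1 hmul).resolve_left (sub_ne_zero.2 (Nat.cast_injective.ne hj))
  simp only [h2, sub_zero, mul_one, mul_zero] at h1 hlower hupper hlower' hupper'
  exact ⟨h1, h2, ⟨hlower, hupper⟩, ⟨hlower', hupper'⟩⟩

lemma vertexEdgeIntersect_gridTriangle_of_apex_ne (hj : j ≠ j') (hi : i ≤ i') :
    VertexEdgeIntersect (gridTriangle i j) (gridTriangle i' j') := by
  rcases (by lia : i' = i ∨ i' = i + 1 ∨ i + 2 ≤ i') with rfl | rfl | hgap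
  · refine vertexEdgeIntersect_of_inter_subset_segment (basePoint_ne_basePoint_succ i')
      (basePoint_mem_gridTriangle.2 (Or.inl rfl)) (basePoint_mem_gridTriangle.2 (Or.inr rfl))
      (basePoint_mem_gridTriangle.2 (Or.inl rfl)) (basePoint_mem_gridTriangle.2 (Or.inr rfl))
      fun p hp => ?_
    obtain ⟨h1, h2, ⟨hlower, hupper⟩, -⟩ := mem_inter_convexHull_gridTriangle hj hp
    refine ⟨i' + 1 - p 0, p 0 - i', by linarith, by linarith, by ring,
      ext_coordinates ?_ (by simp [basePoint, h1]) (by simp [basePoint, h2])⟩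
    change (i' + 1 - p 0) * (i' : ℝ) + (p 0 - i') * ((i' + 1 : ℕ) : ℝ) = p 0
    push_cast
    ring
  · refine vertexEdgeIntersect_of_inter_subset_singleton
      (basePoint_mem_gridTriangle.2 (Or.inr rfl)) (basePoint_mem_gridTriangle.2 (Or.inl rfl))
      fun p hp => ?_
    obtain ⟨h1, h2, ⟨-, hupper⟩, ⟨hlower, -⟩⟩ := mem_inter_convexHull_gridTriangle hj hp
    push_cast at hlower
    exact ext_coordinates (by simpa [basePoint] using hupper.antisymm hlower)
      (by simp [basePoint, h1]) (by simp [basePoint, h2])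
  · refine Or.inl (Set.eq_empty_iff_forall_notMem.2 fun p hp => ?_)
    obtain ⟨-, -, ⟨-, hupper⟩, ⟨hlower, -⟩⟩ := mem_inter_convexHull_gridTriangle hj hp
    have hgap : (i : ℝ) + 2 ≤ i' := by exact_mod_cast hgap
    linarith

lemma vertexEdgeIntersect_gridTriangle (h : gridTriangle i j ≠ gridTriangle i' j') :
    VertexEdgeIntersect (gridTriangle i j) (gridTriangle i' j') := by
  wlog hi : i ≤ i' generalizing i j i' j'
  · exact (this h.symm (le_of_not_ge hi)).symm
  by_cases hj : j = j'
  · subst hj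
    exact vertexEdgeIntersect_gridTriangle_of_lt j (hi.lt_of_ne fun hii' => h (by rw [hii']))
  · exact vertexEdgeIntersect_gridTriangle_of_apex_ne hj hi

open Classical in
/-- The vertices of the triangles `gridTriangle i j` with `i, j < m`. -/
def gridPoints (m : ℕ) : Finset E3 :=
  (Finset.range (m + 1)).image basePoint ∪ (Finset.range m).image apexPoint

open Classical in
/-- The `m ^ 2` triangles `gridTriangle i j` with `i, j < m`. -/
def gridTriangles (m : ℕ) : Finset (Finset E3) :=
  (Finset.range m ×ˢ Finset.range m).image fun q => gridTriangle q.1 q.2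

lemma card_gridPoints_le (m : ℕ) : (gridPoints m).card ≤ 2 * m + 1 := by
  classical
  calc (gridPoints m).card ≤ (m + 1) + m := (Finset.card_union_le _ _).trans
        (add_le_add (Finset.card_image_le.trans_eq (Finset.card_range _))
          (Finset.card_image_le.trans_eq (Finset.card_range _)))
    _ = 2 * m + 1 := by ring

lemma card_gridTriangles (m : ℕ) : (gridTriangles m).card = m ^ 2 := by
  classical
  rw [gridTriangles, Finset.card_image_of_injective _ gridTriangle_injective, Finset.card_product,
    Finset.card_range, sq]

lemma gridTriangle_subset_gridPoints {m : ℕ} (hi : i < m) (hj : j < m) :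
    gridTriangle i j ⊆ gridPoints m := by
  classical
  intro p hp
  rw [gridPoints, Finset.mem_union]
  rcases mem_gridTriangle.1 hp with rfl | rfl | rfl
  · exact Or.inl (Finset.mem_image_of_mem _ (Finset.mem_range.2 (by lia)))
  · exact Or.inl (Finset.mem_image_of_mem _ (Finset.mem_range.2 (by lia)))
  · exact Or.inr (Finset.mem_image_of_mem _ (Finset.mem_range.2 hj))

lemma isTriangleFamily_gridTriangles {m : ℕ} {S : Finset E3} (hS : gridPoints m ⊆ S) :
    IsTriangleFamily S (gridTriangles m) := by
  classical
  constructor <;> simp only [gridTriangles, Finset.forall_mem_image, Finset.mem_product,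
    Finset.mem_range]
  · exact fun q hq => isTriangleOn_iff_not_collinear.2
      ⟨(gridTriangle_subset_gridPoints hq.1 hq.2).trans hS, card_gridTriangle _ _,
        not_collinear_gridTriangle _ _⟩
  · exact fun q _ q' _ => vertexEdgeIntersect_gridTriangle

theorem exists_isTriangleFamily_card_eq_sq {n m : ℕ} (h : 2 * m + 1 ≤ n) :
    ∃ S T, S.card = n ∧ IsTriangleFamily S T ∧ T.card = m ^ 2 := by
  obtain ⟨S, hS, hcard⟩ :=
    Infinite.exists_superset_card_eq (gridPoints m) n ((card_gridPoints_le m).trans h)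
  exact ⟨S, gridTriangles m, hcard, isTriangleFamily_gridTriangles hS, card_gridTriangles m⟩

end Grid

/-! ### Bounds on `f2` -/

lemma mem_upperBounds_card_triangleFamily (n : ℕ) :
    3 * n ^ 2 ∈ upperBounds {m | ∃ (S : Finset E3) (T : Finset (Finset E3)), S.card = n ∧
      (∀ t ∈ T, IsTriangleOn S t) ∧
      (∀ t₁ ∈ T, ∀ t₂ ∈ T, t₁ ≠ t₂ → VertexEdgeIntersect t₁ t₂) ∧ T.card = m} := by
  rintro _ ⟨S, T, rfl, htri, hinter, rfl⟩
  exact IsTriangleFamily.card_le ⟨htri, hinter⟩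

lemma f2_le (n : ℕ) : f2 n ≤ 3 * n ^ 2 :=
  csSup_le' (mem_upperBounds_card_triangleFamily n)

lemma IsTriangleFamily.card_le_f2 {S : Finset E3} {T : Finset (Finset E3)}
    (hT : IsTriangleFamily S T) : T.card ≤ f2 S.card :=
  le_csSup ⟨_, mem_upperBounds_card_triangleFamily _⟩
    ⟨S, T, rfl, hT.isTriangleOn, hT.vertexEdgeIntersect, rfl⟩

lemma sq_le_f2 {n m : ℕ} (h : 2 * m + 1 ≤ n) : m ^ 2 ≤ f2 n := by
  obtain ⟨S, T, rfl, hT, hcard⟩ := exists_isTriangleFamily_card_eq_sq h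
  exact hcard ▸ hT.card_le_f2

theorem stmt2 :
    (∀ n : ℕ, 3 ≤ n → Odd n → ∃ (S : Finset E3) (T : Finset (Finset E3)),
      S.card = n ∧ (∀ t ∈ T, IsTriangleOn S t) ∧
      (∀ t₁ ∈ T, ∀ t₂ ∈ T, t₁ ≠ t₂ → VertexEdgeIntersect t₁ t₂) ∧
      ((n : ℝ) - 1) ^ 2 / 4 ≤ (T.card : ℝ)) ∧
    (∃ c₁ c₂ : ℝ, 0 < c₁ ∧ 0 < c₂ ∧ ∃ N : ℕ, ∀ n : ℕ, N ≤ n →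
      c₁ * (n : ℝ) ^ 2 ≤ (f2 n : ℝ) ∧ (f2 n : ℝ) ≤ c₂ * (n : ℝ) ^ 2) := by
  constructor
  · rintro n - ⟨m, rfl⟩
    obtain ⟨S, T, hS, hT, hcard⟩ := exists_isTriangleFamily_card_eq_sq (le_refl (2 * m + 1))
    refine ⟨S, T, hS, hT.isTriangleOn, hT.vertexEdgeIntersect, le_of_eq ?_⟩
    rw [hcard]
    push_cast
    ring
  · refine ⟨1 / 16, 3, by norm_num, by norm_num, 4, fun n hn => ⟨?_, by exact_mod_cast f2_le n⟩⟩
    have hn_le : (n : ℝ) ≤ 4 * ((n - 1) / 2 : ℕ) := by exact_mod_cast (by omega)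
    calc 1 / 16 * (n : ℝ) ^ 2 ≤ 1 / 16 * (4 * ((n - 1) / 2 : ℕ)) ^ 2 := by gcongr
      _ = (((n - 1) / 2 : ℕ) : ℝ) ^ 2 := by ring
      _ ≤ f2 n := by exact_mod_cast sq_le_f2 (by omega)
end
end

section
/- For every even integer n ≥ 4 there exist a set S of n points in ℝ³ and a family of at least (n² − 2n)/8 quadrilaterals (4-gons) on S such that no two of these quadrilaterals intersect badly. Consequently, the maximum number f₃(n,4) of 4-gons on n points in ℝ³ without bad intersections satisfies f₃(n,4) = Ω(n²). -/
open EuclideanGeometry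

noncomputable section

attribute [local instance] Classical.propDecidable

/-- A `k`-gon in ℝ³: a set of `k` coplanar points in convex position. -/
def IsKGon (k : ℕ) (P : Finset E3) : Prop :=
  P.card = k ∧ Coplanar ℝ (P : Set E3) ∧
    ∀ p ∈ P, p ∉ convexHull ℝ ((P.erase p) : Set E3)

/-- A `k`-gon on a point set `S`. -/
def IsKGonOn (k : ℕ) (S P : Finset E3) : Prop :=
  P ⊆ S ∧ IsKGon k P

/-- Two polygons (given by their vertex sets) intersect badly if the intersection of their
convex hulls contains a common vertex and also a point in the relative interior of each. -/
def IntersectBadly (P Q : Finset E3) : Prop :=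
  (∃ v, v ∈ P ∧ v ∈ Q ∧
    v ∈ convexHull ℝ (P : Set E3) ∩ convexHull ℝ (Q : Set E3)) ∧
  (∃ x, x ∈ convexHull ℝ (P : Set E3) ∩ convexHull ℝ (Q : Set E3) ∧
    x ∈ intrinsicInterior ℝ (convexHull ℝ (P : Set E3)) ∧
    x ∈ intrinsicInterior ℝ (convexHull ℝ (Q : Set E3)))

/-- `f₃(n,k)`: the maximum possible number of `k`-gons on `n` points in ℝ³ without
bad intersections. -/
noncomputable def f3 (n k : ℕ) : ℕ :=
  sSup {m | ∃ (S : Finset E3) (T : Finset (Finset E3)), S.card = n ∧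
    (∀ P ∈ T, IsKGonOn k S P) ∧
    (∀ P ∈ T, ∀ Q ∈ T, P ≠ Q → ¬ IntersectBadly P Q) ∧ T.card = m}

/-!
Place the points on a parabola in a horizontal plane and on its translate one unit higher. Any two
points of the parabola, together with their two translates, span a vertical rectangle. The vertical
plane through two points of the parabola has the rest of any rectangle that shares a vertical side
with it strictly on one side, so the relative interior of such a rectangle misses that plane; two
rectangles sharing a vertex share a vertical side. Hence all `m.choose 2` rectangles over `m`
points of the parabola can be taken, on `n = 2 * m` points.
-/

section IntrinsicInterior

open Filter Topology

theorem eventually_lineMap_mem_of_mem_intrinsicInterior {R V P : Type*} [Ring R]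
    [TopologicalSpace R] [AddCommGroup V] [Module R V] [TopologicalSpace V] [ContinuousSMul R V]
    [AddTorsor V P] [TopologicalSpace P] [IsTopologicalAddTorsor P] {C : Set P} {x y : P}
    (hx : x ∈ intrinsicInterior R C) (hy : y ∈ affineSpan R C) :
    ∀ᶠ t : R in 𝓝 0, AffineMap.lineMap x y t ∈ C := by
  obtain ⟨x, hx_interior, rfl⟩ := mem_intrinsicInterior.1 hx
  let line : R → affineSpan R C := fun t ↦
    ⟨AffineMap.lineMap (x : P) y t, AffineMap.lineMap_mem t x.2 hy⟩
  have line_zero : line 0 = x := Subtype.ext (AffineMap.lineMap_apply_zero _ _)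
  have line_tendsto : Tendsto line (𝓝 0) (𝓝 x) := by
    have hline : Continuous line := AffineMap.lineMap_continuous.subtype_mk _
    simpa only [line_zero] using hline.tendsto 0
  exact line_tendsto (mem_interior_iff_mem_nhds.1 hx_interior)

variable {𝕜 V P E : Type*} [Field 𝕜] [LinearOrder 𝕜] [IsStrictOrderedRing 𝕜] [TopologicalSpace 𝕜]
  [OrderTopology 𝕜]

theorem eq_of_isMinOn_of_mem_intrinsicInterior [AddCommGroup V] [Module 𝕜 V] [TopologicalSpace V]
    [ContinuousSMul 𝕜 V] [AddTorsor V P] [TopologicalSpace P] [IsTopologicalAddTorsor P]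
    {f : P →ᵃ[𝕜] 𝕜} {C : Set P} {x y : P} (hmin : IsMinOn f C x)
    (hx : x ∈ intrinsicInterior 𝕜 C) (hy : y ∈ C) : f y = f x := by
  have hline : ∀ᶠ t : 𝕜 in 𝓝[<] 0, AffineMap.lineMap x y t ∈ C :=
    nhdsWithin_le_nhds <|
      eventually_lineMap_mem_of_mem_intrinsicInterior hx (subset_affineSpan 𝕜 C hy)
  obtain ⟨t, ht, ht_neg⟩ := (hline.and self_mem_nhdsWithin).exists
  have hbeyond : f x ≤ t * (f y - f x) + f x := by
    simpa only [Set.mem_ofPred_eq, AffineMap.apply_lineMap, AffineMap.lineMap_apply_module',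
      smul_eq_mul]
      using hmin ht
  have hle : f y - f x ≤ 0 := nonpos_of_mul_nonneg_right (by linarith) ht_neg
  exact le_antisymm (sub_nonpos.1 hle) (hmin hy)

theorem disjoint_convexHull_intrinsicInterior_convexHull [AddCommGroup E] [Module 𝕜 E]
    [TopologicalSpace E] [IsTopologicalAddGroup E] [ContinuousSMul 𝕜 E] {f : E →ᵃ[𝕜] 𝕜}
    {A B : Set E} {c : 𝕜} (hA : ∀ a ∈ A, f a ≤ c) (hB : ∀ b ∈ B, c ≤ f b)
    (hne : ∃ b ∈ B, f b ≠ c) :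
    Disjoint (convexHull 𝕜 A) (intrinsicInterior 𝕜 (convexHull 𝕜 B)) := by
  refine Set.disjoint_left.2 fun x hxA hxB ↦ ?_
  have hxc : f x ≤ c := convexHull_min hA ((convex_Iic c).affine_preimage f) hxA
  have hBc : ∀ b ∈ convexHull 𝕜 B, c ≤ f b := fun b hb ↦
    convexHull_min hB ((convex_Ici c).affine_preimage f) hb
  have hfx : f x = c := le_antisymm hxc (hBc x (intrinsicInterior_subset hxB))
  obtain ⟨b, hb, hbc⟩ := hne
  have hmin : IsMinOn f (convexHull 𝕜 B) x := fun y hy ↦ hfx.trans_le (hBc y hy)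
  exact hbc <|
    (eq_of_isMinOn_of_mem_intrinsicInterior hmin hxB (subset_convexHull 𝕜 B hb)).trans hfx

end IntrinsicInterior

theorem convexIndependent_of_forall_exists_forall_lt {𝕜 E : Type*} [Ring 𝕜] [LinearOrder 𝕜]
    [IsStrictOrderedRing 𝕜] [AddCommGroup E] [Module 𝕜 E] {s : Set E}
    (h : ∀ p ∈ s, ∃ f : E →ᵃ[𝕜] 𝕜, ∀ q ∈ s, q ≠ p → f p < f q) :
    ConvexIndependent 𝕜 ((↑) : s → E) := by
  refine convexIndependent_set_iff_notMem_convexHull_sdiff.2 fun p hp hmem ↦ ?_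
  obtain ⟨f, hf⟩ := h p hp
  have hlt : p ∈ f ⁻¹' Set.Ioi (f p) :=
    convexHull_min (fun q hq ↦ hf q hq.1 hq.2) ((convex_Ioi _).affine_preimage f) hmem
  exact lt_irrefl _ hlt

theorem coplanar_of_vsub_eq_vsub {k V P : Type*} [DivisionRing k] [AddCommGroup V] [Module k V]
    [AddTorsor V P] {p q r s : P} (h : p -ᵥ q = r -ᵥ s) : Coplanar k ({p, q, r, s} : Set P) := by
  have hp : (1 : k) • (r -ᵥ s) +ᵥ q = p := by rw [one_smul, ← h, vsub_vadd]
  refine (coplanar_insert_iff_of_mem_affineSpan ?_).2 (coplanar_triple k q r s)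
  rw [← hp]
  apply AffineSubspace.smul_vsub_vadd_mem <;> exact mem_affineSpan k (by simp)

theorem exists_ne_and_eq_pair_of_card_eq_two {α : Type*} [DecidableEq α] {e : Finset α} {a : α}
    (he : e.card = 2) (ha : a ∈ e) : ∃ b, b ≠ a ∧ e = {a, b} := by
  obtain ⟨b, hb⟩ : ∃ b, e.erase a = {b} :=
    Finset.card_eq_one.1 (by rw [Finset.card_erase_of_mem ha, he])
  exact ⟨b, Finset.ne_of_mem_erase (hb ▸ Finset.mem_singleton_self b),
    by rw [← hb, Finset.insert_erase ha]⟩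

/-- The point at height `h` above the point `(t, t²)` of the standard parabola. -/
def prismPoint (t h : ℝ) : E3 := !₂[t, t ^ 2, h]

theorem prismPoint_injective2 : Function.Injective2 prismPoint := fun t t' h h' heq ↦
  ⟨by simpa [prismPoint] using congrArg (fun p : E3 ↦ p 0) heq,
    by simpa [prismPoint] using congrArg (fun p : E3 ↦ p 2) heq⟩

/-- The vertices of the right prism of height `1` over the points `(t, t²)` with `t ∈ e`. For
`e = {s, t}` they are the vertices of a vertical rectangle. -/
def prism (e : Finset ℝ) : Finset E3 := Finset.image₂ prismPoint e {0, 1}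

theorem mem_prism {e : Finset ℝ} {p : E3} :
    p ∈ prism e ↔ ∃ t ∈ e, ∃ h : ℝ, (h = 0 ∨ h = 1) ∧ prismPoint t h = p := by
  simp only [prism, Finset.mem_image₂, Finset.mem_insert, Finset.mem_singleton]

theorem prismPoint_zero_mem_prism {e : Finset ℝ} {t : ℝ} : prismPoint t 0 ∈ prism e ↔ t ∈ e := by
  simp [prism, prismPoint_injective2.eq_iff]

theorem prism_injective : Function.Injective prism := fun e e' h ↦ by
  ext t
  rw [← prismPoint_zero_mem_prism, h, prismPoint_zero_mem_prism]

theorem prism_mono : Monotone prism := fun _ _ h ↦ Finset.image₂_subset_right h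

theorem card_prism (e : Finset ℝ) : (prism e).card = 2 * e.card := by
  rw [prism, Finset.card_image₂ prismPoint_injective2, Finset.card_pair zero_ne_one, mul_comm]

/-- The affine functional `p ↦ p₁ - (s + t) p₀ + s t`, whose zero set is the vertical plane through
the points of the parabola with abscissae `s` and `t`, tangent to the parabola if `s = t`. -/
def chordFunctional (s t : ℝ) : E3 →ᵃ[ℝ] ℝ :=
  (EuclideanSpace.projₗ 1 - (s + t) • EuclideanSpace.projₗ 0 : E3 →ₗ[ℝ] ℝ).toAffineMap +
    AffineMap.const ℝ E3 (s * t)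

theorem chordFunctional_prismPoint (s t r h : ℝ) :
    chordFunctional s t (prismPoint r h) = (r - s) * (r - t) :=
  calc chordFunctional s t (prismPoint r h)
    _ = r ^ 2 - (s + t) * r + s * t := rfl
    _ = (r - s) * (r - t) := by ring

/-- The affine functional that on the two heights `0` and `1` of the prism agrees with
`prismPoint r k ↦ (r - t) ^ 2 + (k - h) ^ 2`, so that its minimum there is attained only at
`prismPoint t h`. An affine functional can do this because `0` and `1` are idempotent. -/
def sqDistFunctional (t h : ℝ) : E3 →ᵃ[ℝ] ℝ :=
  chordFunctional t t + ((1 - 2 * h) • EuclideanSpace.projₗ 2 : E3 →ₗ[ℝ] ℝ).toAffineMap +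
    AffineMap.const ℝ E3 h

theorem sqDistFunctional_prismPoint (t : ℝ) {h : ℝ} (hh : IsIdempotentElem h) (t' : ℝ) {h' : ℝ}
    (hh' : IsIdempotentElem h') :
    sqDistFunctional t h (prismPoint t' h') = (t' - t) ^ 2 + (h' - h) ^ 2 :=
  calc sqDistFunctional t h (prismPoint t' h')
    _ = chordFunctional t t (prismPoint t' h') + (1 - 2 * h) * h' + h := rfl
    _ = (t' - t) ^ 2 + (h' - h) ^ 2 := by
      rw [chordFunctional_prismPoint]
      linear_combination -hh.eq - hh'.eq

theorem convexIndependent_prism (e : Finset ℝ) :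
    ConvexIndependent ℝ ((↑) : ↥(prism e : Set E3) → E3) := by
  refine convexIndependent_of_forall_exists_forall_lt fun p hp ↦ ?_
  obtain ⟨t, -, h, hh, rfl⟩ := mem_prism.1 hp
  refine ⟨sqDistFunctional t h, fun q hq hne ↦ ?_⟩
  obtain ⟨t', -, h', hh', rfl⟩ := mem_prism.1 hq
  rw [← IsIdempotentElem.iff_eq_zero_or_one] at hh hh'
  rw [sqDistFunctional_prismPoint t hh t hh, sqDistFunctional_prismPoint t hh t' hh', sub_self,
    sub_self, zero_pow two_ne_zero, add_zero]
  obtain ht | hh : t' - t ≠ 0 ∨ h' - h ≠ 0 := by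
    by_contra! heq
    exact hne (by rw [sub_eq_zero.1 heq.1, sub_eq_zero.1 heq.2])
  all_goals positivity

theorem coplanar_prism_pair (s t : ℝ) : Coplanar ℝ (prism {s, t} : Set E3) := by
  have hsides : prismPoint s 1 -ᵥ prismPoint s 0 = prismPoint t 1 -ᵥ prismPoint t 0 := by
    ext i; fin_cases i <;> simp [prismPoint]
  refine (coplanar_of_vsub_eq_vsub hsides).subset fun p hp ↦ ?_
  obtain ⟨r, hr, h, rfl | rfl, rfl⟩ := mem_prism.1 hp <;>
    rcases Finset.mem_insert.1 hr with rfl | hr <;> simp_all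

theorem isKGon_four_prism {e : Finset ℝ} (he : e.card = 2) : IsKGon 4 (prism e) := by
  refine ⟨by rw [card_prism, he], ?_, fun p hp ↦ ?_⟩
  · obtain ⟨s, t, -, rfl⟩ := Finset.card_eq_two.1 he
    exact coplanar_prism_pair s t
  · rw [Finset.coe_erase]
    exact convexIndependent_set_iff_notMem_convexHull_sdiff.1 (convexIndependent_prism e) p hp

theorem disjoint_convexHull_intrinsicInterior_prism {i j k : ℝ} (hki : k ≠ i) (hkj : k ≠ j) :
    Disjoint (convexHull ℝ (prism {i, j} : Set E3))
      (intrinsicInterior ℝ (convexHull ℝ (prism {i, k} : Set E3))) := by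
  have hk : (k - i) * (k - j) ≠ 0 := mul_ne_zero (sub_ne_zero.2 hki) (sub_ne_zero.2 hkj)
  -- The factor makes the functional nonnegative on the second rectangle.
  let f : E3 →ᵃ[ℝ] ℝ := ((k - i) * (k - j)) • chordFunctional i j
  have hf (t h : ℝ) : f (prismPoint t h) = (k - i) * (k - j) * ((t - i) * (t - j)) := by
    simp only [f, AffineMap.coe_smul, Pi.smul_apply, chordFunctional_prismPoint, smul_eq_mul]
  refine disjoint_convexHull_intrinsicInterior_convexHull (f := f) (c := 0) ?_ ?_
    ⟨prismPoint k 0, prismPoint_zero_mem_prism.2 (by simp), by rw [hf]; exact mul_ne_zero hk hk⟩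
  · intro p hp
    obtain ⟨t, ht, h, -, rfl⟩ := mem_prism.1 hp
    obtain rfl | rfl : t = i ∨ t = j := by simpa using ht
    all_goals simp [hf]
  · intro p hp
    obtain ⟨t, ht, h, -, rfl⟩ := mem_prism.1 hp
    obtain rfl | rfl : t = i ∨ t = k := by simpa using ht
    · simp [hf]
    · rw [hf]; exact mul_self_nonneg _

theorem not_intersectBadly_prism {e e' : Finset ℝ} (he : e.card = 2) (he' : e'.card = 2)
    (hne : e ≠ e') : ¬ IntersectBadly (prism e) (prism e') := by
  rintro ⟨⟨v, hv, hv', -⟩, x, ⟨hx, -⟩, -, hx'⟩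
  obtain ⟨i, hi, h, -, rfl⟩ := mem_prism.1 hv
  obtain ⟨i', hi', h', -, heq⟩ := mem_prism.1 hv'
  obtain rfl : i' = i := (prismPoint_injective2 heq).1
  obtain ⟨j, -, rfl⟩ := exists_ne_and_eq_pair_of_card_eq_two he hi
  obtain ⟨k, hki, rfl⟩ := exists_ne_and_eq_pair_of_card_eq_two he' hi'
  have hkj : k ≠ j := by rintro rfl; exact hne rfl
  exact Set.disjoint_left.1 (disjoint_convexHull_intrinsicInterior_prism hki hkj) hx hx'

theorem exists_family_card_eq_choose_two (m : ℕ) : ∃ (S : Finset E3) (T : Finset (Finset E3)),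
    S.card = 2 * m ∧ (∀ P ∈ T, IsKGonOn 4 S P) ∧
    (∀ P ∈ T, ∀ Q ∈ T, P ≠ Q → ¬ IntersectBadly P Q) ∧ T.card = m.choose 2 := by
  obtain ⟨s, rfl⟩ : ∃ s : Finset ℝ, s.card = m := Infinite.exists_subset_card_eq ℝ m
  refine ⟨prism s, (s.powersetCard 2).map ⟨prism, prism_injective⟩, card_prism s, ?_, ?_, ?_⟩
  · simp only [Finset.forall_mem_map, Finset.mem_powersetCard]
    exact fun e ⟨hes, he⟩ ↦ ⟨prism_mono hes, isKGon_four_prism he⟩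
  · simp only [Finset.forall_mem_map, Finset.mem_powersetCard]
    exact fun e ⟨_, he⟩ e' ⟨_, he'⟩ hne ↦ not_intersectBadly_prism he he' (ne_of_apply_ne prism hne)
  · rw [Finset.card_map, Finset.card_powersetCard]

theorem card_le_f3 {n k : ℕ} {S : Finset E3} {T : Finset (Finset E3)} (hS : S.card ≤ n)
    (hT : ∀ P ∈ T, IsKGonOn k S P) (hgood : ∀ P ∈ T, ∀ Q ∈ T, P ≠ Q → ¬ IntersectBadly P Q) :
    T.card ≤ f3 n k := by
  obtain ⟨S', hSS', hS'⟩ := Infinite.exists_superset_card_eq S n hS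
  refine le_csSup ⟨2 ^ n, ?_⟩
    ⟨S', T, hS', fun P hP ↦ ⟨(hT P hP).1.trans hSS', (hT P hP).2⟩, hgood, rfl⟩
  rintro _ ⟨S, T, rfl, hT, -, rfl⟩
  rw [← Finset.card_powerset]
  exact Finset.card_le_card fun P hP ↦ Finset.mem_powerset.2 (hT P hP).1

theorem sq_div_sixteen_le_choose_two_half {n : ℕ} (hn : 8 ≤ n) :
    (1 / 16 : ℝ) * (n : ℝ) ^ 2 ≤ ((n / 2).choose 2 : ℕ) := by
  have hn' : (8 : ℝ) ≤ n := by exact_mod_cast hn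
  have hhalf : (n : ℝ) ≤ 2 * (n / 2 : ℕ) + 1 := by exact_mod_cast (by omega : n ≤ 2 * (n / 2) + 1)
  rw [Nat.cast_choose_two]
  nlinarith

theorem stmt8 :
    (∀ n : ℕ, 4 ≤ n → Even n → ∃ (S : Finset E3) (T : Finset (Finset E3)),
      S.card = n ∧ (∀ P ∈ T, IsKGonOn 4 S P) ∧
      (∀ P ∈ T, ∀ Q ∈ T, P ≠ Q → ¬ IntersectBadly P Q) ∧
      ((n : ℝ) ^ 2 - 2 * (n : ℝ)) / 8 ≤ (T.card : ℝ)) ∧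
    (∃ c : ℝ, 0 < c ∧ ∃ N : ℕ, ∀ n : ℕ, N ≤ n → c * (n : ℝ) ^ 2 ≤ (f3 n 4 : ℝ)) := by
  refine ⟨fun n _ hn ↦ ?_, 1 / 16, by norm_num, 8, fun n hn ↦ ?_⟩
  · obtain ⟨m, rfl⟩ := hn.two_dvd
    obtain ⟨S, T, hS, hT, hgood, hcard⟩ := exists_family_card_eq_choose_two m
    refine ⟨S, T, hS, hT, hgood, le_of_eq ?_⟩
    rw [hcard, Nat.cast_choose_two]
    push_cast
    ring
  · obtain ⟨S, T, hS, hT, hgood, hcard⟩ := exists_family_card_eq_choose_two (n / 2)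
    have hle : (n / 2).choose 2 ≤ f3 n 4 := hcard ▸ card_le_f3 (by omega) hT hgood
    exact (sq_div_sixteen_le_choose_two_half hn).trans (by exact_mod_cast hle)
end
end

section
/- For every c ≥ 1, every 0 < α < π/2, and every ε > 0, there exists N such that for all n ≥ N the following holds: if S is a set of n points in ℝ³ and T is a family of (c,α)-fat hexagons with all vertices in S such that no two hexagons of T intersect badly, then |T| ≤ ε n². Equivalently, the maximum size F_{(c,α)}(n) of such a family satisfies F_{(c,α)}(n)/n² → 0 as n → ∞. -/
open Real EuclideanGeometry

noncomputable section

/-- A hexagon in ℝ³, given by its vertices `V 0, …, V 5` listed in cyclic boundary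
order: the vertices are distinct, coplanar, in convex position, and consecutive
vertices are adjacent on the boundary (the segment between them avoids the relative
interior of the hexagon). -/
def IsHexagon (V : Fin 6 → E3) : Prop :=
  Function.Injective V ∧
  Coplanar ℝ (Set.range V) ∧
  (∀ i : Fin 6, V i ∉ convexHull ℝ (V '' {j | j ≠ i})) ∧
  (∀ i : Fin 6,
    openSegment ℝ (V i) (V (i + 1)) ∩
      intrinsicInterior ℝ (convexHull ℝ (Set.range V)) = ∅)

/-- A hexagon is `(c, α)`-fat if the ratio of any two sides lies in `[1/c, c]` and it has
three pairwise non-neighbouring vertices (an alternating triple) whose interior angles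
lie in `[α, π - α]`. -/
def IsFatHexagon (c α : ℝ) (V : Fin 6 → E3) : Prop :=
  IsHexagon V ∧
  (∀ i j : Fin 6, dist (V i) (V (i + 1)) ≤ c * dist (V j) (V (j + 1))) ∧
  ((∀ i : Fin 6, Even (i : ℕ) →
      α ≤ ∠ (V (i - 1)) (V i) (V (i + 1)) ∧ ∠ (V (i - 1)) (V i) (V (i + 1)) ≤ π - α) ∨
   (∀ i : Fin 6, Odd (i : ℕ) →
      α ≤ ∠ (V (i - 1)) (V i) (V (i + 1)) ∧ ∠ (V (i - 1)) (V i) (V (i + 1)) ≤ π - α))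

/-- The (unordered) vertex set `H` forms a `(c, α)`-fat hexagon. -/
def IsFatHexagonSet (c α : ℝ) (H : Finset E3) : Prop :=
  ∃ V : Fin 6 → E3, IsFatHexagon c α V ∧ (H : Set E3) = Set.range V

/-!
The even- or odd-indexed vertices of a fat hexagon form a triangle out of which the hexagon bulges
on all three sides, by an amount bounded below in barycentric coordinates; up to homothety these
triangles range over a totally bounded set. Partitioning the hexagons according to a finite net of
shapes, one may assume that all these triangles are nearly homothetic to a single one.

Label the vertices of each triangle compatibly and regard the triangles as living in a tripartite
graph on three copies of the point set. Two triangles with a common edge have badly intersecting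
hexagons, since the midpoint of the edge is interior to both. If three triangles each contain one of
the edges of a triangle `Q`, then near homothety forces their scales to agree, so that each of them
is a small perturbation of `Q` in one vertex. Two of the three perturbed vertices lie on the same
side of the plane of `Q`, and their hexagons intersect badly. Hence the triangles are edge-disjoint
and are the only triangles of the graph, so the triangle removal lemma bounds their number by
`o(n²)`.
-/

section Combinations

variable {ι E : Type*} [Fintype ι]

lemma sum_fin_three_of_ne {M : Type*} [AddCommMonoid M] (f : Fin 3 → M) {i j k : Fin 3}
    (hij : i ≠ j) (hik : i ≠ k) (hjk : j ≠ k) : ∑ l, f l = f i + f j + f k := by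
  have huniv : (Finset.univ : Finset (Fin 3)) = {i, j, k} := by revert i j k; decide
  rw [huniv, Finset.sum_insert (by simp [hij, hik]), Finset.sum_pair hjk, add_assoc]

lemma exists_ne_ne (i : Fin 3) : ∃ j k : Fin 3, i ≠ j ∧ i ≠ k ∧ j ≠ k := by
  revert i; decide

lemma exists_third {i j : Fin 3} (hij : i ≠ j) : ∃ k, i ≠ k ∧ j ≠ k := by
  revert i j; decide

lemma exists_sum_smul_eq_of_mem_affineSpan [AddCommGroup E] [Module ℝ E] {P : ι → E} {x : E}
    (hx : x ∈ affineSpan ℝ (Set.range P)) : ∃ w : ι → ℝ, ∑ i, w i = 1 ∧ ∑ i, w i • P i = x := by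
  obtain ⟨w, hw, rfl⟩ := eq_affineCombination_of_mem_affineSpan_of_fintype hx
  exact ⟨w, hw, (Finset.affineCombination_eq_linear_combination _ P w hw).symm⟩

lemma exists_sum_smul_eq_of_mem_vectorSpan [AddCommGroup E] [Module ℝ E] [Nonempty ι] {P : ι → E}
    {y : E} (hy : y ∈ vectorSpan ℝ (Set.range P)) :
    ∃ x : ι → ℝ, ∑ i, x i = 0 ∧ ∑ i, x i • P i = y := by
  classical
  obtain ⟨i⟩ := ‹Nonempty ι›
  obtain ⟨w, hw, hwP⟩ := exists_sum_smul_eq_of_mem_affineSpan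
    (vadd_mem_affineSpan_of_mem_affineSpan_of_mem_vectorSpan
      (mem_affineSpan ℝ (Set.mem_range_self i)) hy)
  exact ⟨w - Pi.single i 1, by simp [hw], by simp [sub_smul, hwP, Pi.single_apply]⟩

-- `∑ w • P` is a convex combination of `∑ v • P`, with weight `t`, and of the points `P i`,
-- with weights `w i - t * v i`.
lemma sum_smul_mem_of_mul_le [AddCommGroup E] [Module ℝ E] {s : Set E} (hs : Convex ℝ s)
    {P : ι → E} {v w : ι → ℝ} (hv : ∑ i, v i = 1) (hw : ∑ i, w i = 1) (hvs : ∑ i, v i • P i ∈ s)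
    {t : ℝ} (ht : 0 ≤ t) (hle : ∀ i, t * v i ≤ w i) (hPs : ∀ i, t * v i ≠ w i → P i ∈ s) :
    ∑ i, w i • P i ∈ s := by
  classical
  set x := ∑ i, v i • P i with hx
  have hmem := hs.sum_mem (t := Finset.univ)
    (w := fun o : Option ι => o.elim t fun i => w i - t * v i)
    (z := fun o => o.elim x fun i => if t * v i = w i then x else P i)
    (by rintro (_ | i) _ <;> simp [ht, hle])
    (by simp [Fintype.sum_option, ← Finset.mul_sum, hv, hw])
    (by
      rintro (_ | i) _ <;> simp only [Option.elim]
      · exact hvs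
      · split_ifs with h
        exacts [hvs, hPs i h])
  convert hmem using 1
  have hterm : ∀ i, (w i - t * v i) • (if t * v i = w i then x else P i)
      = w i • P i - t • v i • P i := fun i => by
    split_ifs with h
    · rw [← h, mul_smul, sub_self, zero_smul, sub_self]
    · rw [sub_smul, mul_smul]
  simp only [Fintype.sum_option, Option.elim, hterm, Finset.sum_sub_distrib,
    ← Finset.smul_sum, ← hx]
  abel

lemma exists_continuous_weights [Nonempty ι] [NormedAddCommGroup E] [NormedSpace ℝ E]
    {P : ι → E} (hP : AffineIndependent ℝ P) :
    ∃ c : affineSpan ℝ (Set.range P) → ι → ℝ, Continuous c ∧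
      ∀ y, ∑ i, c y i = 1 ∧ ∑ i, c y i • P i = y := by
  let A := affineSpan ℝ (Set.range P)
  let Q : ι → A := fun i => ⟨P i, mem_affineSpan ℝ ⟨i, rfl⟩⟩
  have hQ : Set.range Q = (↑) ⁻¹' Set.range P := by
    ext y; simp [Q, Subtype.ext_iff]
  let b : AffineBasis ι ℝ A :=
    ⟨Q, AffineIndependent.of_comp A.subtype hP, hQ ▸ affineSpan_coe_preimage_eq_top _⟩
  have : FiniteDimensional ℝ A.direction := b.finiteDimensional
  refine ⟨fun y i => b.coord i y, continuous_pi fun i => continuous_barycentric_coord b i,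
    fun y => ⟨b.sum_coord_apply_eq_one y, ?_⟩⟩
  have hy := congrArg A.subtype (b.affineCombination_coord_eq_self y)
  rwa [Finset.map_affineCombination _ _ _ (b.sum_coord_apply_eq_one y),
    Finset.affineCombination_eq_linear_combination _ _ _ (b.sum_coord_apply_eq_one y)] at hy

lemma weights_eq_of_sum_smul_eq [AddCommGroup E] [Module ℝ E] {P : ι → E}
    (hP : AffineIndependent ℝ P) {v w : ι → ℝ} (hv : ∑ i, v i = 1) (hw : ∑ i, w i = 1)
    (h : ∑ i, v i • P i = ∑ i, w i • P i) : v = w := by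
  refine (affineIndependent_iff_eq_of_fintype_affineCombination_eq ℝ P).1 hP v w hv hw ?_
  rwa [Finset.affineCombination_eq_linear_combination _ _ _ hv,
    Finset.affineCombination_eq_linear_combination _ _ _ hw]

lemma mem_intrinsicInterior_of_isOpen [NormedAddCommGroup E] [NormedSpace ℝ E] {s : Set E}
    {A : AffineSubspace ℝ E} (hA : affineSpan ℝ s = A) {U : Set A} (hU : IsOpen U)
    (hUs : ∀ y ∈ U, (y : E) ∈ s) {x : A} (hx : x ∈ U) : (x : E) ∈ intrinsicInterior ℝ s := by
  subst hA
  exact Set.mem_image_of_mem _ (mem_interior.2 ⟨U, hUs, hU, hx⟩)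

lemma sum_smul_mem_intrinsicInterior [NormedAddCommGroup E] [NormedSpace ℝ E] {s : Set E}
    (hs : Convex ℝ s) {P : ι → E} (hP : AffineIndependent ℝ P) (hPs : ∀ i, P i ∈ s)
    (hspan : s ⊆ affineSpan ℝ (Set.range P)) {v w : ι → ℝ} (hv : ∑ i, v i = 1) (hw : ∑ i, w i = 1)
    (hvs : ∑ i, v i • P i ∈ s) {t : ℝ} (ht : 0 ≤ t) (hlt : ∀ i, t * v i < w i) :
    ∑ i, w i • P i ∈ intrinsicInterior ℝ s := by
  have hA : affineSpan ℝ s = affineSpan ℝ (Set.range P) :=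
    le_antisymm (affineSpan_le.2 hspan) (affineSpan_mono ℝ (Set.range_subset_iff.2 hPs))
  have hws : ∑ i, w i • P i ∈ s :=
    sum_smul_mem_of_mul_le hs hv hw hvs ht (fun i => (hlt i).le) fun i _ => hPs i
  have : Nonempty ι := not_isEmpty_iff.1 fun _ => by simp at hw
  obtain ⟨c, hc, hcP⟩ := exists_continuous_weights hP
  let x : affineSpan ℝ (Set.range P) := ⟨_, hspan hws⟩
  have hx : c x = w := weights_eq_of_sum_smul_eq hP (hcP x).1 hw (hcP x).2
  have hopen : IsOpen {y | ∀ i, t * v i < c y i} := by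
    simp only [Set.ofPred_forall]
    exact isOpen_iInter_of_finite fun i =>
      isOpen_lt continuous_const ((continuous_apply i).comp hc)
  refine mem_intrinsicInterior_of_isOpen hA hopen (fun y hy => ?_) (x := x)
    (by simpa [hx] using hlt)
  rw [← (hcP y).2]
  exact sum_smul_mem_of_mul_le hs hv (hcP y).1 hvs ht (fun i => (hy i).le) fun i _ => hPs i

lemma sum_smul_mem_intrinsicInterior_of_pos [NormedAddCommGroup E] [NormedSpace ℝ E] {s : Set E}
    (hs : Convex ℝ s) {P : ι → E} (hP : AffineIndependent ℝ P) (hPs : ∀ i, P i ∈ s)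
    (hspan : s ⊆ affineSpan ℝ (Set.range P)) {w : ι → ℝ} (hw : ∑ i, w i = 1) (hpos : ∀ i, 0 < w i) :
    ∑ i, w i • P i ∈ intrinsicInterior ℝ s :=
  sum_smul_mem_intrinsicInterior hs hP hPs hspan hw hw
    (hs.sum_mem (fun i _ => (hpos i).le) hw fun i _ => hPs i) le_rfl fun i => by simpa using hpos i

end Combinations

section ConvexPosition

variable {ι E : Type*} [Fintype ι] [AddCommGroup E] [Module ℝ E]

lemma mem_of_forall_weight_nonpos {s : Set E} (hs : Convex ℝ s) {P : ι → E} {v : ι → ℝ}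
    (hv : ∑ i, v i = 1) (hvs : ∑ i, v i • P i ∈ s) {i : ι} (hPs : ∀ j, j ≠ i → P j ∈ s)
    (hneg : ∀ j, j ≠ i → v j ≤ 0) : P i ∈ s := by
  classical
  have hi : 0 < v i := by
    rw [← Finset.add_sum_erase _ _ (Finset.mem_univ i)] at hv
    have hrest : ∑ j ∈ Finset.univ.erase i, v j ≤ 0 :=
      Finset.sum_nonpos fun j hj => hneg j (Finset.ne_of_mem_erase hj)
    linarith
  have hmem := sum_smul_mem_of_mul_le hs (w := Pi.single i 1) hv (by simp) hvs
    (inv_nonneg.2 hi.le) (fun j => ?_) fun j hj => hPs j ?_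
  · simpa [Pi.single_apply, ite_smul] using hmem
  · obtain rfl | hji := eq_or_ne j i
    · simp [hi.ne']
    · simpa [hji] using mul_nonpos_of_nonneg_of_nonpos (inv_nonneg.2 hi.le) (hneg j hji)
  · rintro rfl
    simp [hi.ne'] at hj

lemma exists_forall_weight_sign {P : Fin 3 → E} {w : Fin 3 → ℝ} (hw : ∑ i, w i = 1)
    (hx : ∑ i, w i • P i ∉ convexHull ℝ (Set.range P))
    (hP : ∀ i, P i ∉ convexHull ℝ (insert (∑ i, w i • P i) (P '' {j | j ≠ i}))) :
    ∃ m, w m < 0 ∧ ∀ j, j ≠ m → 0 < w j := by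
  obtain ⟨m, hm⟩ : ∃ m, w m < 0 := by
    by_contra! hnonneg
    exact hx ((convex_convexHull ℝ _).sum_mem (fun i _ => hnonneg i) hw
      fun i _ => subset_convexHull ℝ _ ⟨i, rfl⟩)
  refine ⟨m, hm, fun j hj => ?_⟩
  by_contra! hwj
  obtain ⟨k, hjk, hmk⟩ := exists_third hj
  refine hP k (mem_of_forall_weight_nonpos (convex_convexHull ℝ _) hw
    (subset_convexHull ℝ _ (Set.mem_insert _ _))
    (fun l hl => subset_convexHull ℝ _ (Set.mem_insert_of_mem _ ⟨l, hl, rfl⟩)) fun l hl => ?_)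
  obtain rfl | rfl : l = j ∨ l = m := by
    clear hm hwj; revert j m k l; decide
  exacts [hwj, hm.le]

lemma exists_pos_weights_mem_openSegment {P : ι → E} {w : ι → ℝ} (hw : ∑ i, w i = 1) {m : ι}
    (hm : w m < 0) (hpos : ∀ j, j ≠ m → 0 < w j) :
    ∃ v : ι → ℝ, ∑ i, v i = 1 ∧ (∀ i, 0 < v i) ∧
      ∑ i, v i • P i ∈ openSegment ℝ (P m) (∑ i, w i • P i) := by
  classical
  obtain ⟨t, ht₀, ht⟩ : ∃ t : ℝ, 0 < t ∧ t * (1 - w m) < 1 :=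
    have hden : 0 < 1 - w m := by linarith
    ⟨1 / (2 * (1 - w m)), by positivity, by field_simp; norm_num⟩
  have ht₁ : t < 1 := by nlinarith
  refine ⟨fun i => (1 - t) * (Pi.single m 1 : ι → ℝ) i + t * w i, ?_, fun i => ?_,
    1 - t, t, by linarith, ht₀, by ring, ?_⟩
  · simp [Finset.sum_add_distrib, ← Finset.mul_sum, hw]
  · obtain rfl | hi := eq_or_ne i m
    · simp only [Pi.single_eq_same]; linarith
    · simpa [hi] using mul_pos ht₀ (hpos i hi)
  · simp [add_smul, mul_smul, Finset.sum_add_distrib, ← Finset.smul_sum, Pi.single_apply, ite_smul]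

-- Otherwise solving a linear system for `P k` exhibits it as a convex combination of `P i` and the
-- two given points.
lemma mul_lt_mul_of_notMem_convexHull {P : Fin 3 → E} {a b : Fin 3 → ℝ} (ha : ∑ l, a l = 1)
    (hb : ∑ l, b l = 1) {i j k : Fin 3} (hij : i ≠ j) (hik : i ≠ k) (hjk : j ≠ k)
    (haj : 0 < a j) (hak : 0 < a k) (hbj : b j < 0) (hbk : 0 < b k)
    (hP : P k ∉ convexHull ℝ {P i, ∑ l, a l • P l, ∑ l, b l • P l}) :
    a i * b j < a j * b i := by
  by_contra! hle
  have hD : 0 < a j * b k - b j * a k := by nlinarith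
  rw [sum_fin_three_of_ne _ hij hik hjk] at ha hb
  have hmem := (convex_convexHull ℝ {P i, ∑ l, a l • P l, ∑ l, b l • P l}).sum_mem
    (t := Finset.univ)
    (w := fun l => (a j * b k - b j * a k)⁻¹ * ![a i * b j - a j * b i, -b j, a j] l)
    (z := ![P i, ∑ l, a l • P l, ∑ l, b l • P l]) ?_ ?_ ?_
  · refine hP (by
      convert hmem using 1
      rw [Fin.sum_univ_three]
      simp only [Matrix.cons_val, sum_fin_three_of_ne _ hij hik hjk]
      match_scalars <;> field_simp <;> ring)
  · intro l _
    refine mul_nonneg (inv_nonneg.2 hD.le) ?_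
    fin_cases l <;> simp [hle, hbj.le, haj.le]
  · rw [← Finset.mul_sum, inv_mul_eq_one₀ hD.ne']
    simp only [Fin.sum_univ_three, Matrix.cons_val]
    linear_combination a j * hb - b j * ha
  · intro l _
    apply subset_convexHull
    fin_cases l <;> simp

-- If row `i` sums to `1` and `B i i < -1`, then AM-GM makes the product of its off-diagonal entries
-- less than `B i i ^ 2`; the product of the three bounds contradicts that of the bounds `hlt`.
lemma exists_neg_one_le_diag {B : Fin 3 → Fin 3 → ℝ} (hrow : ∀ i, ∑ j, B i j = 1)
    (hpos : ∀ i j, i ≠ j → 0 < B i j)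
    (hlt : ∀ i j, i ≠ j → B i i * B j j < B i j * B j i) : ∃ k, -1 ≤ B k k := by
  by_contra! hB
  have hamgm : ∀ i j k, i ≠ j → i ≠ k → j ≠ k → B i j * B i k < B i i ^ 2 := by
    intro i j k hij hik hjk
    have hsum := hrow i
    rw [sum_fin_three_of_ne _ hij hik hjk] at hsum
    nlinarith [sq_nonneg (B i j - B i k), hB i]
  have hneg : ∀ i, B i i < 0 := fun i => by linarith [hB i]
  have hdiag : ∀ i j, 0 ≤ B i i * B j j := fun i j =>
    mul_nonneg_of_nonpos_of_nonpos (hneg i).le (hneg j).le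
  have hoff : ∀ i j k, i ≠ j → i ≠ k → 0 ≤ B i j * B i k := fun i j k hij hik =>
    (mul_pos (hpos i j hij) (hpos i k hik)).le
  have hlower : B 0 0 * B 1 1 * (B 1 1 * B 2 2) * (B 2 2 * B 0 0)
      < B 0 1 * B 1 0 * (B 1 2 * B 2 1) * (B 2 0 * B 0 2) :=
    mul_lt_mul'' (mul_lt_mul'' (hlt 0 1 (by decide)) (hlt 1 2 (by decide)) (hdiag _ _) (hdiag _ _))
      (hlt 2 0 (by decide)) (mul_nonneg (hdiag _ _) (hdiag _ _)) (hdiag _ _)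
  have hupper : B 0 1 * B 0 2 * (B 1 0 * B 1 2) * (B 2 0 * B 2 1)
      < B 0 0 ^ 2 * B 1 1 ^ 2 * B 2 2 ^ 2 := by
    refine mul_lt_mul'' (mul_lt_mul'' (hamgm _ _ _ ?_ ?_ ?_) (hamgm _ _ _ ?_ ?_ ?_)
      (hoff _ _ _ ?_ ?_) (hoff _ _ _ ?_ ?_)) (hamgm _ _ _ ?_ ?_ ?_)
      (mul_nonneg (hoff _ _ _ ?_ ?_) (hoff _ _ _ ?_ ?_)) (hoff _ _ _ ?_ ?_) <;> decide
  linarith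

end ConvexPosition

section Area

variable {E : Type*} [NormedAddCommGroup E] [InnerProductSpace ℝ E]

/-- The area of the parallelogram spanned by `u` and `v`. -/
def parallelogramArea (u v : E) : ℝ := Real.sin (InnerProductGeometry.angle u v) * (‖u‖ * ‖v‖)

/-- Twice the area of the triangle `P`. -/
def doubleArea (P : Fin 3 → E) : ℝ := parallelogramArea (P 1 - P 0) (P 2 - P 0)

lemma parallelogramArea_eq_sqrt (u v : E) :
    parallelogramArea u v = √(inner ℝ u u * inner ℝ v v - inner ℝ u v * inner ℝ u v) :=
  InnerProductGeometry.sin_angle_mul_norm_mul_norm u v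

lemma parallelogramArea_nonneg (u v : E) : 0 ≤ parallelogramArea u v :=
  mul_nonneg (InnerProductGeometry.sin_angle_nonneg u v) (by positivity)

lemma parallelogramArea_le_mul_norm (u v : E) : parallelogramArea u v ≤ ‖u‖ * ‖v‖ :=
  mul_le_of_le_one_left (by positivity) (Real.sin_le_one _)

lemma sin_mul_norm_le_parallelogramArea {α : ℝ} (hα : 0 ≤ α) {u v : E}
    (h : InnerProductGeometry.angle u v ∈ Set.Icc α (π - α)) :
    Real.sin α * (‖u‖ * ‖v‖) ≤ parallelogramArea u v := by
  obtain ⟨h₁, h₂⟩ := h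
  refine mul_le_mul_of_nonneg_right ?_ (by positivity)
  obtain h | h := le_total (InnerProductGeometry.angle u v) (π / 2)
  · exact Real.sin_le_sin_of_le_of_le_pi_div_two (by linarith [Real.pi_pos]) h h₁
  · rw [← Real.sin_pi_sub (InnerProductGeometry.angle u v)]
    exact Real.sin_le_sin_of_le_of_le_pi_div_two (by linarith [Real.pi_pos]) (by linarith)
      (by linarith)

lemma parallelogramArea_linear_combination (u v : E) (a b c d : ℝ) :
    parallelogramArea (a • u + b • v) (c • u + d • v) =
      |a * d - b * c| * parallelogramArea u v := by
  rw [parallelogramArea_eq_sqrt, parallelogramArea_eq_sqrt, ← Real.sqrt_sq_eq_abs,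
    ← Real.sqrt_mul (sq_nonneg _)]
  congr 1
  simp only [inner_add_left, inner_add_right, real_inner_smul_left, real_inner_smul_right,
    real_inner_comm u v]
  ring

variable {P : Fin 3 → E} {i j k : Fin 3}

lemma parallelogramArea_sub_eq_doubleArea (hij : i ≠ j) (hik : i ≠ k) (hjk : j ≠ k) :
    parallelogramArea (P i - P k) (P j - P k) = doubleArea P := by
  let a : Fin 3 → ℝ := ![0, 1, 0]
  let b : Fin 3 → ℝ := ![0, 0, 1]
  have hcoord : ∀ l, P l - P k = (a l - a k) • (P 1 - P 0) + (b l - b k) • (P 2 - P 0) := by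
    have hP : ∀ l, P l = P 0 + a l • (P 1 - P 0) + b l • (P 2 - P 0) := by
      intro l; fin_cases l <;> simp [a, b]
    intro l
    rw [hP l, hP k]
    module
  have hdet : |(a i - a k) * (b j - b k) - (b i - b k) * (a j - a k)| = 1 := by
    fin_cases i <;> fin_cases j <;> fin_cases k <;> simp [a, b] at hij hik hjk ⊢
  rw [hcoord i, hcoord j, parallelogramArea_linear_combination, hdet, one_mul, doubleArea]

lemma parallelogramArea_sum_smul {x y : Fin 3 → ℝ} (hx : ∑ l, x l = 0) (hy : ∑ l, y l = 0)
    (hij : i ≠ j) :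
    parallelogramArea (∑ l, x l • P l) (∑ l, y l • P l)
      = |x i * y j - x j * y i| * doubleArea P := by
  obtain ⟨k, hik, hjk⟩ := exists_third hij
  have hcoord : ∀ z : Fin 3 → ℝ, ∑ l, z l = 0 →
      ∑ l, z l • P l = z i • (P i - P k) + z j • (P j - P k) := fun z hz => by
    rw [sum_fin_three_of_ne _ hij hik hjk] at hz ⊢
    rw [show z k = -z i - z j by linarith]
    module
  rw [hcoord x hx, hcoord y hy, parallelogramArea_linear_combination,
    parallelogramArea_sub_eq_doubleArea hij hik hjk]

lemma abs_mul_doubleArea_le {x : Fin 3 → ℝ} (hx : ∑ l, x l = 0) (hij : i ≠ j) (hik : i ≠ k)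
    (hjk : j ≠ k) : |x i| * doubleArea P ≤ ‖∑ l, x l • P l‖ * ‖P j - P k‖ := by
  have hside : P j - P k = ∑ l, (Pi.single j 1 - Pi.single k 1 : Fin 3 → ℝ) l • P l := by
    simp [sub_smul, Pi.single_apply, ite_smul]
  calc |x i| * doubleArea P = parallelogramArea (∑ l, x l • P l) (P j - P k) := by
        rw [hside, parallelogramArea_sum_smul hx (by simp) hij]
        simp [hij, hik, hjk]
    _ ≤ _ := parallelogramArea_le_mul_norm _ _

lemma parallelogramArea_sub_sum_smul {w : Fin 3 → ℝ} (hw : ∑ l, w l = 1) (hij : i ≠ j) (hik : i ≠ k)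
    (hjk : j ≠ k) :
    parallelogramArea (P i - ∑ l, w l • P l) (P j - ∑ l, w l • P l) = |w k| * doubleArea P := by
  have hcoord : ∀ m, P m - ∑ l, w l • P l = ∑ l, (Pi.single m 1 - w : Fin 3 → ℝ) l • P l := by
    intro m
    simp [sub_smul, Pi.single_apply, ite_smul]
  rw [hcoord, hcoord, parallelogramArea_sum_smul (by simp [hw]) (by simp [hw]) hij]
  rw [sum_fin_three_of_ne _ hij hik hjk] at hw
  simp only [Pi.sub_apply, Pi.single_eq_same, Pi.single_eq_of_ne hij, Pi.single_eq_of_ne hij.symm]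
  rw [show w k = 1 - w i - w j by linarith]
  ring_nf

end Area

section ThickTriangle

variable {ι E : Type*} [Fintype ι] [NormedAddCommGroup E]

/-- Quantitative affine independence of `P`: a combination of the points `P i` with weights of sum
`0` controls each of its weights. -/
def IsNondegenerate [NormedSpace ℝ E] (K : ℝ) (P : ι → E) : Prop :=
  ∀ x : ι → ℝ, ∑ i, x i = 0 → ∀ i, |x i| ≤ K * ‖∑ i, x i • P i‖

/-- The triangle `P` has its vertices in `s`, and the convex hull of `s` bulges out of it on all
three sides by an amount `η`, measured in barycentric coordinates and away from the vertices. -/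
def IsThick [NormedSpace ℝ E] (η : ℝ) (s : Set E) (P : Fin 3 → E) : Prop :=
  (∀ i, P i ∈ s) ∧ ∀ w : Fin 3 → ℝ, ∑ i, w i = 1 → (∀ i, -η < w i ∧ w i ≤ 3 / 4) →
    ∑ i, w i • P i ∈ intrinsicInterior ℝ (convexHull ℝ s)

/-- The points `W k` are the apexes of three ears attached to the triangle `P`, the ear `W k` to the
side opposite `P k`: all sides of the ears have length between `L` and `c * L` and the angles at
the apexes lie between `α` and `π - α`. -/
structure HasFatEars [InnerProductSpace ℝ E] (c α L : ℝ) (P W : Fin 3 → E) : Prop where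
  norm_mem : ∀ ⦃i k⦄, i ≠ k → ‖P i - W k‖ ∈ Set.Icc L (c * L)
  angle_mem : ∀ ⦃i j k⦄, i ≠ j → i ≠ k → j ≠ k →
    InnerProductGeometry.angle (P i - W k) (P j - W k) ∈ Set.Icc α (π - α)

lemma isThick_of_weights [NormedSpace ℝ E] {s : Set E} {P : Fin 3 → E} (hP : AffineIndependent ℝ P)
    (hPs : ∀ i, P i ∈ s) (hspan : s ⊆ affineSpan ℝ (Set.range P)) {B : Fin 3 → Fin 3 → ℝ}
    (hB : ∀ k, ∑ l, B k l = 1) (hBs : ∀ k, ∑ l, B k l • P l ∈ s) {κ ν : ℝ} (hν : 0 < ν)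
    (hdiag : ∀ k, B k k ≤ -κ) (hle : ∀ k l, k ≠ l → B k l ≤ ν) : IsThick (κ / (8 * ν)) s P := by
  refine ⟨hPs, fun w hw hbd => ?_⟩
  have hsub := subset_convexHull ℝ s
  have hspan' := convexHull_min hspan (affineSpan ℝ (Set.range P)).convex
  by_cases hpos : ∀ k, 0 < w k
  · exact sum_smul_mem_intrinsicInterior_of_pos (convex_convexHull ℝ s) hP
      (fun i => hsub (hPs i)) hspan' hw hpos
  push Not at hpos
  obtain ⟨k, hk⟩ := hpos
  refine sum_smul_mem_intrinsicInterior (convex_convexHull ℝ s) hP (fun i => hsub (hPs i)) hspan'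
    (hB k) hw (hsub (hBs k)) (t := 1 / (8 * ν)) (by positivity) fun i => ?_
  obtain rfl | hik := eq_or_ne i k
  · calc 1 / (8 * ν) * B i i ≤ 1 / (8 * ν) * -κ := by gcongr; exact hdiag i
      _ = -(κ / (8 * ν)) := by ring
      _ < w i := (hbd i).1
  · obtain ⟨j, hij, hkj⟩ := exists_third hik
    rw [sum_fin_three_of_ne _ hik hij hkj] at hw
    calc 1 / (8 * ν) * B k i ≤ 1 / (8 * ν) * ν := by gcongr; exact hle k i hik.symm
      _ = 1 / 8 := by field_simp
      _ < w i := by linarith [(hbd j).2]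

namespace HasFatEars

variable [InnerProductSpace ℝ E] {c α L : ℝ} {P W : Fin 3 → E}

lemma norm_sub_le (h : HasFatEars c α L P W) {i j : Fin 3} (hij : i ≠ j) :
    ‖P i - P j‖ ≤ 2 * c * L := by
  obtain ⟨k, hik, hjk⟩ := exists_third hij
  calc ‖P i - P j‖ ≤ ‖P i - W k‖ + ‖W k - P j‖ := norm_sub_le_norm_sub_add_norm_sub _ _ _
    _ ≤ c * L + c * L := by
        rw [norm_sub_rev (W k)]
        exact add_le_add (h.norm_mem hik).2 (h.norm_mem hjk).2
    _ = 2 * c * L := by ring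

lemma doubleArea_le (h : HasFatEars c α L P W) : doubleArea P ≤ 4 * c ^ 2 * L ^ 2 := by
  calc doubleArea P ≤ ‖P 1 - P 0‖ * ‖P 2 - P 0‖ := parallelogramArea_le_mul_norm _ _
    _ ≤ (2 * c * L) * (2 * c * L) := by
        have h₁ := h.norm_sub_le (i := 1) (j := 0) (by decide)
        have h₂ := h.norm_sub_le (i := 2) (j := 0) (by decide)
        exact mul_le_mul h₁ h₂ (norm_nonneg _) ((norm_nonneg _).trans h₁)
    _ = 4 * c ^ 2 * L ^ 2 := by ring

lemma sin_pos (h : HasFatEars c α L P W) (hα : 0 < α) : 0 < Real.sin α := by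
  obtain ⟨h₁, h₂⟩ := h.angle_mem (i := 0) (j := 1) (k := 2) (by decide) (by decide) (by decide)
  exact Real.sin_pos_of_pos_of_lt_pi hα (by linarith)

variable {B : Fin 3 → Fin 3 → ℝ}

lemma sin_mul_sq_le_abs_mul_doubleArea (h : HasFatEars c α L P W) (hα : 0 < α) (hL : 0 < L)
    (hB : ∀ k, ∑ l, B k l = 1) (hW : ∀ k, ∑ l, B k l • P l = W k) (k : Fin 3) :
    Real.sin α * L ^ 2 ≤ |B k k| * doubleArea P := by
  obtain ⟨i, j, hki, hkj, hij⟩ := exists_ne_ne k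
  rw [← parallelogramArea_sub_sum_smul (hB k) hij hki.symm hkj.symm, hW k]
  calc Real.sin α * L ^ 2 = Real.sin α * (L * L) := by ring
    _ ≤ Real.sin α * (‖P i - W k‖ * ‖P j - W k‖) := by
        have := h.sin_pos hα
        gcongr
        exacts [(h.norm_mem hki.symm).1, (h.norm_mem hkj.symm).1]
    _ ≤ _ := sin_mul_norm_le_parallelogramArea hα.le (h.angle_mem hij hki.symm hkj.symm)

lemma abs_mul_doubleArea_le_sq (h : HasFatEars c α L P W) (hB : ∀ k, ∑ l, B k l = 1)
    (hW : ∀ k, ∑ l, B k l • P l = W k) (k : Fin 3) :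
    |B k k| * doubleArea P ≤ c ^ 2 * L ^ 2 := by
  obtain ⟨i, j, hki, hkj, hij⟩ := exists_ne_ne k
  rw [← parallelogramArea_sub_sum_smul (hB k) hij hki.symm hkj.symm, hW k]
  have hi := (h.norm_mem hki.symm).2
  calc _ ≤ ‖P i - W k‖ * ‖P j - W k‖ := parallelogramArea_le_mul_norm _ _
    _ ≤ (c * L) * (c * L) :=
        mul_le_mul hi (h.norm_mem hkj.symm).2 (norm_nonneg _) ((norm_nonneg _).trans hi)
    _ = c ^ 2 * L ^ 2 := by ring

lemma div_le_abs_diag (h : HasFatEars c α L P W) (hα : 0 < α) (hL : 0 < L)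
    (hB : ∀ k, ∑ l, B k l = 1) (hW : ∀ k, ∑ l, B k l • P l = W k) (k : Fin 3) :
    Real.sin α / (4 * c ^ 2) ≤ |B k k| := by
  refine div_le_of_le_mul₀ (by positivity) (abs_nonneg _) ?_
  refine le_of_mul_le_mul_right ?_ (pow_pos hL 2)
  calc Real.sin α * L ^ 2 ≤ |B k k| * doubleArea P :=
        h.sin_mul_sq_le_abs_mul_doubleArea hα hL hB hW k
    _ ≤ |B k k| * (4 * c ^ 2 * L ^ 2) := by gcongr; exact h.doubleArea_le
    _ = _ := by ring

lemma sin_mul_sq_le_doubleArea (h : HasFatEars c α L P W) (hα : 0 < α) (hL : 0 < L)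
    (hB : ∀ k, ∑ l, B k l = 1) (hW : ∀ k, ∑ l, B k l • P l = W k) (hB₁ : ∃ k, |B k k| ≤ 1) :
    Real.sin α * L ^ 2 ≤ doubleArea P := by
  obtain ⟨k, hk⟩ := hB₁
  exact (h.sin_mul_sq_le_abs_mul_doubleArea hα hL hB hW k).trans
    (mul_le_of_le_one_left (parallelogramArea_nonneg _ _) hk)

lemma abs_diag_le (h : HasFatEars c α L P W) (hα : 0 < α) (hL : 0 < L)
    (hB : ∀ k, ∑ l, B k l = 1) (hW : ∀ k, ∑ l, B k l • P l = W k)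
    (harea : Real.sin α * L ^ 2 ≤ doubleArea P) (k : Fin 3) :
    |B k k| ≤ c ^ 2 / Real.sin α := by
  rw [le_div_iff₀ (h.sin_pos hα)]
  refine le_of_mul_le_mul_right ?_ (pow_pos hL 2)
  calc |B k k| * Real.sin α * L ^ 2 = |B k k| * (Real.sin α * L ^ 2) := by ring
    _ ≤ |B k k| * doubleArea P := by gcongr
    _ ≤ c ^ 2 * L ^ 2 := h.abs_mul_doubleArea_le_sq hB hW k

lemma isNondegenerate (h : HasFatEars c α L P W) (hα : 0 < α) (hL : 0 < L)
    (harea : Real.sin α * L ^ 2 ≤ doubleArea P) :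
    IsNondegenerate (2 * c / (Real.sin α * L)) P := by
  intro x hx i
  obtain ⟨j, k, hij, hik, hjk⟩ := exists_ne_ne i
  have hsin := h.sin_pos hα
  rw [div_mul_eq_mul_div, le_div_iff₀ (by positivity)]
  refine le_of_mul_le_mul_right ?_ hL
  calc |x i| * (Real.sin α * L) * L = |x i| * (Real.sin α * L ^ 2) := by ring
    _ ≤ |x i| * doubleArea P := by gcongr
    _ ≤ ‖∑ l, x l • P l‖ * ‖P j - P k‖ := abs_mul_doubleArea_le hx hij hik hjk
    _ ≤ ‖∑ l, x l • P l‖ * (2 * c * L) := by gcongr; exact h.norm_sub_le hjk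
    _ = _ := by ring

lemma isThick (h : HasFatEars c α L P W) (hα : 0 < α) (hL : 0 < L)
    (hB : ∀ k, ∑ l, B k l = 1) (hW : ∀ k, ∑ l, B k l • P l = W k)
    (harea : Real.sin α * L ^ 2 ≤ doubleArea P) (hneg : ∀ k, B k k < 0)
    (hpos : ∀ k l, k ≠ l → 0 < B k l) {s : Set E} (hP : AffineIndependent ℝ P)
    (hspan : s ⊆ affineSpan ℝ (Set.range P)) (hPs : ∀ i, P i ∈ s) (hWs : ∀ k, W k ∈ s) :
    IsThick (Real.sin α / (4 * c ^ 2) / (8 * (1 + c ^ 2 / Real.sin α))) s P := by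
  have hsin := h.sin_pos hα
  refine isThick_of_weights hP hPs hspan hB (fun k => (hW k).symm ▸ hWs k) (by positivity)
    (fun k => ?_) fun k l hkl => ?_
  · have hk := h.div_le_abs_diag hα hL hB hW k
    rw [abs_of_neg (hneg k)] at hk
    linarith
  · obtain ⟨m, hkm, hlm⟩ := exists_third hkl
    have hk := h.abs_diag_le hα hL hB hW harea k
    rw [abs_of_neg (hneg k)] at hk
    have hsum := hB k
    rw [sum_fin_three_of_ne _ hkl hkm hlm] at hsum
    linarith [hpos k m hkm]

end HasFatEars

end ThickTriangle

section Hexagon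

/-- Indices of the core triangle `V 0, V 2, V 4` of a hexagon `V`. -/
def coreIndex : Fin 3 → Fin 6 := ![0, 2, 4]

/-- Indices of the remaining vertices of a hexagon, ordered so that the vertex of index `earIndex k`
is the common neighbour of the core vertices other than that of index `coreIndex k`. -/
def earIndex : Fin 3 → Fin 6 := ![3, 5, 1]

lemma subset_affineSpan_of_coplanar {E : Type*} [AddCommGroup E] [Module ℝ E] {P : Fin 3 → E}
    (hP : AffineIndependent ℝ P) {s : Set E} (hs : Coplanar ℝ s) (hPs : ∀ i, P i ∈ s) :
    s ⊆ affineSpan ℝ (Set.range P) := by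
  have := hs.finiteDimensional_vectorSpan
  have hle : vectorSpan ℝ (Set.range P) ≤ vectorSpan ℝ s :=
    vectorSpan_mono ℝ (Set.range_subset_iff.2 hPs)
  have heq : vectorSpan ℝ (Set.range P) = vectorSpan ℝ s :=
    Submodule.eq_of_le_of_finrank_le hle
      (by rw [hP.finrank_vectorSpan (n := 2) (by simp)]; exact hs.finrank_le_two)
  intro x hx
  have hP₀ : P 0 ∈ affineSpan ℝ (Set.range P) := mem_affineSpan ℝ ⟨0, rfl⟩
  rw [SetLike.mem_coe, ← AffineSubspace.vsub_right_mem_direction_iff_mem hP₀, direction_affineSpan,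
    heq]
  exact vsub_mem_vectorSpan ℝ hx (hPs 0)

lemma affineIndependent_of_notMem_convexHull {E : Type*} [AddCommGroup E] [Module ℝ E]
    {P : Fin 3 → E} (hP : ∀ i, P i ∉ convexHull ℝ (P '' {j | j ≠ i})) : AffineIndependent ℝ P := by
  have hbtw : ∀ i j k, i ≠ k → i ≠ j → ¬ Wbtw ℝ (P j) (P i) (P k) := fun i j k hik hij h =>
    hP i (segment_subset_convexHull (Set.mem_image_of_mem P hij.symm)
      (Set.mem_image_of_mem P hik.symm) (mem_segment_iff_wbtw.2 h))
  rw [affineIndependent_iff_not_collinear_of_ne (i₁ := 0) (i₂ := 1) (i₃ := 2) (by decide)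
    (by decide) (by decide)]
  intro hcol
  obtain h | h | h := hcol.wbtw_or_wbtw_or_wbtw <;> revert h <;> apply hbtw <;> decide

lemma coreIndex_injective : Function.Injective coreIndex := by decide

lemma coreIndex_ne_earIndex (i k : Fin 3) : coreIndex i ≠ earIndex k := by
  revert i k; decide

lemma odd_earIndex (k : Fin 3) : Odd (earIndex k : ℕ) := by
  revert k; decide

lemma earIndex_eq_or_coreIndex_eq {i k : Fin 3} (hik : i ≠ k) :
    earIndex k = coreIndex i + 1 ∨ coreIndex i = earIndex k + 1 := by
  revert i k; decide

lemma earIndex_adjacent {i j k : Fin 3} (hij : i ≠ j) (hik : i ≠ k) (hjk : j ≠ k) :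
    (coreIndex i = earIndex k - 1 ∧ coreIndex j = earIndex k + 1) ∨
      (coreIndex j = earIndex k - 1 ∧ coreIndex i = earIndex k + 1) := by
  revert i j k; decide

namespace IsHexagon

variable {V : Fin 6 → E3}

lemma rotate (hV : IsHexagon V) : IsHexagon fun i => V (i + 1) := by
  obtain ⟨hinj, hcop, hpos, hside⟩ := hV
  have hrange : Set.range (fun i => V (i + 1)) = Set.range V :=
    (Equiv.addRight (1 : Fin 6)).surjective.range_comp V
  refine ⟨hinj.comp (add_left_injective 1), hrange ▸ hcop, fun i hi => hpos (i + 1) ?_,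
    fun i => hrange ▸ hside (i + 1)⟩
  refine convexHull_mono ?_ hi
  rintro _ ⟨j, hj, rfl⟩
  exact ⟨j + 1, fun h => hj (add_right_cancel h), rfl⟩

lemma notMem_convexHull (hV : IsHexagon V) {i : Fin 6} {s : Set E3}
    (hs : ∀ x ∈ s, ∃ j, j ≠ i ∧ V j = x) : V i ∉ convexHull ℝ s :=
  fun hi => hV.2.2.1 i (convexHull_mono hs hi)

lemma affineIndependent_core (hV : IsHexagon V) : AffineIndependent ℝ (V ∘ coreIndex) := by
  refine affineIndependent_of_notMem_convexHull fun i => hV.notMem_convexHull ?_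
  rintro _ ⟨j, hj, rfl⟩
  exact ⟨_, coreIndex_injective.ne hj, rfl⟩

lemma range_subset_affineSpan_core (hV : IsHexagon V) :
    Set.range V ⊆ affineSpan ℝ (Set.range (V ∘ coreIndex)) :=
  subset_affineSpan_of_coplanar hV.affineIndependent_core hV.2.1 fun i => ⟨coreIndex i, rfl⟩

lemma disjoint_openSegment_intrinsicInterior (hV : IsHexagon V) {i k : Fin 3} (hik : i ≠ k) :
    Disjoint (openSegment ℝ (V (coreIndex i)) (V (earIndex k)))
      (intrinsicInterior ℝ (convexHull ℝ (Set.range V))) := by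
  rw [Set.disjoint_iff_inter_eq_empty]
  obtain h | h := earIndex_eq_or_coreIndex_eq hik
  · exact h ▸ hV.2.2.2 _
  · rw [openSegment_symm]
    exact h ▸ hV.2.2.2 _

lemma weight_sign (hV : IsHexagon V) {w : Fin 3 → ℝ} {k : Fin 3} (hw : ∑ l, w l = 1)
    (hwk : ∑ l, w l • (V ∘ coreIndex) l = V (earIndex k)) : w k < 0 ∧ ∀ j, j ≠ k → 0 < w j := by
  obtain ⟨m, hm, hpos⟩ := exists_forall_weight_sign (P := V ∘ coreIndex) hw
    (hwk ▸ hV.notMem_convexHull (by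
      rintro _ ⟨j, rfl⟩
      exact ⟨_, coreIndex_ne_earIndex j k, rfl⟩))
    (fun i => hwk ▸ hV.notMem_convexHull (by
      rintro _ (rfl | ⟨j, hj, rfl⟩)
      · exact ⟨_, (coreIndex_ne_earIndex i k).symm, rfl⟩
      · exact ⟨_, coreIndex_injective.ne hj, rfl⟩))
  obtain rfl | hmk := eq_or_ne m k
  · exact ⟨hm, hpos⟩
  obtain ⟨v, hv, hvpos, hvseg⟩ := exists_pos_weights_mem_openSegment (P := V ∘ coreIndex) hw hm hpos
  refine absurd ?_ (Set.disjoint_left.1 (hV.disjoint_openSegment_intrinsicInterior hmk)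
    (hwk ▸ hvseg))
  exact sum_smul_mem_intrinsicInterior_of_pos (convex_convexHull ℝ _) hV.affineIndependent_core
    (fun i => subset_convexHull ℝ _ (Set.mem_range_self (coreIndex i)))
    (convexHull_min hV.range_subset_affineSpan_core (AffineSubspace.convex _)) hv hvpos

lemma exists_ear_weights (hV : IsHexagon V) :
    ∃ B : Fin 3 → Fin 3 → ℝ, (∀ k, ∑ l, B k l = 1) ∧
      (∀ k, ∑ l, B k l • (V ∘ coreIndex) l = V (earIndex k)) ∧
      (∀ k, B k k < 0) ∧ (∀ k l, k ≠ l → 0 < B k l) ∧ ∃ k, |B k k| ≤ 1 := by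
  choose B hB hBV using fun k => exists_sum_smul_eq_of_mem_affineSpan
    (hV.range_subset_affineSpan_core ⟨earIndex k, rfl⟩)
  have hneg : ∀ k, B k k < 0 := fun k => (hV.weight_sign (hB k) (hBV k)).1
  have hpos : ∀ k l, k ≠ l → 0 < B k l := fun k l hkl =>
    (hV.weight_sign (hB k) (hBV k)).2 l hkl.symm
  have hlt : ∀ i j, i ≠ j → B i i * B j j < B i j * B j i := fun i j hij => by
    obtain ⟨k, hik, hjk⟩ := exists_third hij
    refine mul_lt_mul_of_notMem_convexHull (P := V ∘ coreIndex) (hB i) (hB j) hij hik hjk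
      (hpos i j hij) (hpos i k hik) (hneg j) (hpos j k hjk) (hV.notMem_convexHull ?_)
    rw [hBV, hBV]
    rintro _ (rfl | rfl | rfl)
    exacts [⟨_, coreIndex_injective.ne hik, rfl⟩,
      ⟨_, (coreIndex_ne_earIndex k i).symm, rfl⟩,
      ⟨_, (coreIndex_ne_earIndex k j).symm, rfl⟩]
  obtain ⟨k, hk⟩ := exists_neg_one_le_diag hB hpos hlt
  exact ⟨B, hB, hBV, hneg, hpos, k, by rw [abs_of_neg (hneg k)]; linarith⟩

lemma exists_hasFatEars (hV : IsHexagon V) {c α : ℝ}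
    (hside : ∀ i j : Fin 6, dist (V i) (V (i + 1)) ≤ c * dist (V j) (V (j + 1)))
    (hangle : ∀ i : Fin 6, Odd (i : ℕ) →
      α ≤ ∠ (V (i - 1)) (V i) (V (i + 1)) ∧ ∠ (V (i - 1)) (V i) (V (i + 1)) ≤ π - α) :
    ∃ L, 0 < L ∧ HasFatEars c α L (V ∘ coreIndex) (V ∘ earIndex) := by
  obtain ⟨m, hm⟩ := Finite.exists_min fun i => dist (V i) (V (i + 1))
  have hm_succ : m ≠ m + 1 := (add_ne_left.2 (by decide)).symm
  refine ⟨_, dist_pos.2 (hV.1.ne hm_succ), fun i k hik => ?_, fun i j k hij hik hjk => ?_⟩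
  · simp only [Function.comp_apply, ← dist_eq_norm]
    obtain h | h := earIndex_eq_or_coreIndex_eq hik
    · rw [h]
      exact ⟨hm (coreIndex i), hside (coreIndex i) m⟩
    · rw [h, dist_comm (V (earIndex k + 1))]
      exact ⟨hm (earIndex k), hside (earIndex k) m⟩
  · simp only [Function.comp_apply]
    have hk := hangle (earIndex k) (odd_earIndex k)
    obtain ⟨h₁, h₂⟩ | ⟨h₁, h₂⟩ := earIndex_adjacent hij hik hjk <;> rw [h₁, h₂]
    · exact hk
    · rw [InnerProductGeometry.angle_comm]
      exact hk

end IsHexagon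

end Hexagon

section Shapes

/-- The triangles with vertices in the ball of radius `M` about the origin that are nondegenerate
with constant `G`. -/
def shapes {E : Type*} [NormedAddCommGroup E] [NormedSpace ℝ E] (M G : ℝ) : Set (Fin 3 → E) :=
  {g | (∀ i, ‖g i‖ ≤ M) ∧ IsNondegenerate G g}

lemma HasFatEars.smul_mem_shapes {E : Type*} [NormedAddCommGroup E] [InnerProductSpace ℝ E]
    {c α L : ℝ} {P W : Fin 3 → E} (h : HasFatEars c α L P W) (hc : 0 ≤ c) (hα : 0 < α) (hL : 0 < L)
    (harea : Real.sin α * L ^ 2 ≤ doubleArea P) :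
    (fun i => L⁻¹ • (P i - P 0)) ∈ shapes (2 * c) (2 * c / Real.sin α) := by
  refine ⟨fun i => ?_, fun x hx i => ?_⟩
  · obtain rfl | hi := eq_or_ne i 0
    · simpa using hc
    · rw [norm_smul, norm_inv, Real.norm_of_nonneg hL.le, inv_mul_le_iff₀ hL]
      linarith [h.norm_sub_le hi]
  · have hsum : ∑ l, x l • L⁻¹ • (P l - P 0) = L⁻¹ • ∑ l, x l • P l := by
      simp only [smul_comm _ L⁻¹, ← Finset.smul_sum, smul_sub, Finset.sum_sub_distrib,
        ← Finset.sum_smul, hx, zero_smul, smul_zero, sub_zero]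
    calc |x i| ≤ 2 * c / (Real.sin α * L) * ‖∑ l, x l • P l‖ := h.isNondegenerate hα hL harea x hx i
      _ = 2 * c / Real.sin α * ‖∑ l, x l • L⁻¹ • (P l - P 0)‖ := by
          rw [hsum, norm_smul, norm_inv, Real.norm_of_nonneg hL.le]
          ring

lemma IsHexagon.exists_isThick_shape {V : Fin 6 → E3} (hV : IsHexagon V) {c α : ℝ} (hc : 0 ≤ c)
    (hα : 0 < α)
    (hside : ∀ i j : Fin 6, dist (V i) (V (i + 1)) ≤ c * dist (V j) (V (j + 1)))
    (hangle : ∀ i : Fin 6, Odd (i : ℕ) →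
      α ≤ ∠ (V (i - 1)) (V i) (V (i + 1)) ∧ ∠ (V (i - 1)) (V i) (V (i + 1)) ≤ π - α) :
    ∃ (P g : Fin 3 → E3) (l : ℝ),
      IsThick (Real.sin α / (4 * c ^ 2) / (8 * (1 + c ^ 2 / Real.sin α))) (Set.range V) P ∧
      g ∈ shapes (2 * c) (2 * c / Real.sin α) ∧ 0 < l ∧ ∀ i j, P i - P j = l • (g i - g j) := by
  obtain ⟨L, hL, hears⟩ := hV.exists_hasFatEars hside hangle
  obtain ⟨B, hB, hBV, hneg, hpos, hone⟩ := hV.exists_ear_weights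
  have harea := hears.sin_mul_sq_le_doubleArea hα hL hB hBV hone
  refine ⟨V ∘ coreIndex, _, L, ?_, hears.smul_mem_shapes hc hα hL harea, hL, fun i j => ?_⟩
  · exact hears.isThick hα hL hB hBV harea hneg hpos hV.affineIndependent_core
      hV.range_subset_affineSpan_core (fun i => Set.mem_range_self _) fun k => Set.mem_range_self _
  · rw [← smul_sub, sub_sub_sub_cancel_right, smul_inv_smul₀ hL.ne']

lemma IsFatHexagonSet.exists_isThick_shape {c α : ℝ} (hc : 0 ≤ c) (hα : 0 < α) {H : Finset E3}
    (hH : IsFatHexagonSet c α H) :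
    ∃ (P g : Fin 3 → E3) (l : ℝ),
      IsThick (Real.sin α / (4 * c ^ 2) / (8 * (1 + c ^ 2 / Real.sin α))) (H : Set E3) P ∧
      g ∈ shapes (2 * c) (2 * c / Real.sin α) ∧ 0 < l ∧ ∀ i j, P i - P j = l • (g i - g j) := by
  obtain ⟨V, ⟨hV, hside, hangle⟩, hHV⟩ := hH
  rw [hHV]
  obtain heven | hodd := hangle
  · have hrange : Set.range (fun i => V (i + 1)) = Set.range V :=
      (Equiv.addRight (1 : Fin 6)).surjective.range_comp V
    rw [← hrange]
    refine hV.rotate.exists_isThick_shape hc hα (fun i j => hside (i + 1) (j + 1)) fun i hi => ?_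
    have hsucc : i - 1 + 1 = i + 1 - 1 := by abel
    have hi' : Even ((i + 1 : Fin 6) : ℕ) := by revert i; decide
    simpa only [hsucc] using heven (i + 1) hi'
  · exact hV.exists_isThick_shape hc hα hside hodd

lemma exists_finite_net_shapes {E : Type*} [NormedAddCommGroup E] [NormedSpace ℝ E] [ProperSpace E]
    (M G : ℝ) {δ : ℝ} (hδ : 0 < δ) :
    ∃ F : Finset (Fin 3 → E), (F : Set (Fin 3 → E)) ⊆ shapes M G ∧
      ∀ g ∈ shapes M G, ∃ g' ∈ F, dist g g' < δ := by
  have hbounded : shapes M G ⊆ Set.pi Set.univ fun _ : Fin 3 => Metric.closedBall (0 : E) M :=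
    fun g hg i _ => mem_closedBall_zero_iff.2 (hg.1 i)
  have htb : TotallyBounded (shapes M G : Set (Fin 3 → E)) :=
    (isCompact_univ_pi fun _ => isCompact_closedBall 0 M).totallyBounded.subset hbounded
  obtain ⟨F, hFsub, hF, hcover⟩ := Metric.finite_approx_of_totallyBounded htb δ hδ
  lift F to Finset (Fin 3 → E) using hF
  exact ⟨F, hFsub, fun g hg => by simpa using hcover hg⟩

end Shapes

section NearHomothety

variable {E : Type*} [NormedAddCommGroup E]

/-- The triangle `P` is, up to translation and an error of `δ * l` in each edge, the image of the
triangle `g` under scaling by `l`. -/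
def IsNearHomothet [NormedSpace ℝ E] (δ l : ℝ) (g P : Fin 3 → E) : Prop :=
  ∀ i j, ‖P i - P j - l • (g i - g j)‖ ≤ δ * l

section NormedSpace

variable [NormedSpace ℝ E] {g P Q : Fin 3 → E} {δ l G M : ℝ}

lemma isNearHomothet_of_dist_le {g' : Fin 3 → E} (hP : ∀ i j, P i - P j = l • (g' i - g' j))
    (hl : 0 ≤ l) (hg : dist g' g ≤ δ) : IsNearHomothet (2 * δ) l g P := by
  intro i j
  have hdist : ∀ i, ‖g' i - g i‖ ≤ δ := fun i =>
    dist_eq_norm (g' i) (g i) ▸ (dist_le_pi_dist g' g i).trans hg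
  calc ‖P i - P j - l • (g i - g j)‖ = l * ‖g' i - g i - (g' j - g j)‖ := by
        rw [hP, ← smul_sub, norm_smul, Real.norm_of_nonneg hl, sub_sub_sub_comm]
    _ ≤ l * (δ + δ) := by
        gcongr
        exact (norm_sub_le _ _).trans (add_le_add (hdist i) (hdist j))
    _ = 2 * δ * l := by ring

lemma IsNearHomothet.of_scale {s : ℝ} (h : IsNearHomothet δ s g P) (hg : ∀ i, ‖g i‖ ≤ M)
    (hδ : 0 ≤ δ) (hs : s ≤ 3 * l) (hsl : |s - l| ≤ 3 * G * δ * l) :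
    IsNearHomothet (3 * (1 + 2 * G * M) * δ) l g P := by
  intro i j
  calc ‖P i - P j - l • (g i - g j)‖
      = ‖P i - P j - s • (g i - g j) + (s - l) • (g i - g j)‖ := by congr 1; module
    _ ≤ ‖P i - P j - s • (g i - g j)‖ + |s - l| * ‖g i - g j‖ := by
        rw [← Real.norm_eq_abs, ← norm_smul]
        exact norm_add_le _ _
    _ ≤ δ * (3 * l) + 3 * G * δ * l * (M + M) := by
        gcongr
        · exact (h i j).trans (by gcongr)
        · exact (abs_nonneg _).trans hsl
        · exact (norm_sub_le _ _).trans (add_le_add (hg i) (hg j))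
    _ = 3 * (1 + 2 * G * M) * δ * l := by ring

lemma IsNearHomothet.norm_sub_le {i k : Fin 3} (hP : IsNearHomothet δ l g P)
    (hQ : IsNearHomothet δ l g Q) (hk : P k = Q k) : ‖P i - Q i‖ ≤ 2 * δ * l := by
  calc ‖P i - Q i‖ = ‖P i - P k - l • (g i - g k) - (Q i - Q k - l • (g i - g k))‖ := by
        rw [hk]; congr 1; abel
    _ ≤ δ * l + δ * l := (_root_.norm_sub_le _ _).trans (add_le_add (hP i k) (hQ i k))
    _ = 2 * δ * l := by ring

lemma IsNearHomothet.norm_sum_smul_sub_le (h : IsNearHomothet δ l g P) {x : Fin 3 → ℝ}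
    (hx : ∑ i, x i = 0) :
    ‖∑ i, x i • P i - l • ∑ i, x i • g i‖ ≤ δ * l * ∑ i, |x i| := by
  have hsum : ∑ i, x i • P i - l • ∑ i, x i • g i =
      ∑ i, x i • (P i - P 0 - l • (g i - g 0)) := by
    simp only [smul_sub, Finset.sum_sub_distrib, ← Finset.sum_smul, smul_comm _ l,
      ← Finset.smul_sum, hx, zero_smul, smul_zero, sub_zero]
  rw [hsum, Finset.mul_sum]
  refine norm_sum_le_of_le _ fun i _ => ?_
  rw [norm_smul, Real.norm_eq_abs, mul_comm]
  gcongr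
  exact h i 0

lemma IsNearHomothet.isNondegenerate (h : IsNearHomothet δ l g P) (hg : IsNondegenerate G g)
    (hl : 0 < l) (hG : 0 ≤ G) (hδ : 0 ≤ δ) (hGδ : 6 * G * δ ≤ 1) :
    IsNondegenerate (2 * G / l) P := by
  intro x hx i
  set X := ‖∑ i, x i • g i‖
  have hsum : ∑ i, |x i| ≤ 3 * G * X :=
    (Finset.sum_le_card_nsmul _ _ _ fun i _ => hg x hx i).trans_eq (by simp [X, mul_assoc])
  have hX : l * X ≤ 2 * ‖∑ i, x i • P i‖ := by
    have htri : l * X ≤ ‖∑ i, x i • P i‖ + ‖∑ i, x i • P i - l • ∑ i, x i • g i‖ := by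
      calc l * X = ‖l • ∑ i, x i • g i‖ := by rw [norm_smul, Real.norm_of_nonneg hl.le]
        _ ≤ _ := norm_le_norm_add_norm_sub _ _
    have herr : δ * l * ∑ i, |x i| ≤ l * X / 2 := by
      calc δ * l * ∑ i, |x i| ≤ δ * l * (3 * G * X) := by gcongr
        _ = 6 * G * δ * (l * X / 2) := by ring
        _ ≤ 1 * (l * X / 2) := by gcongr
        _ = l * X / 2 := one_mul _
    linarith [h.norm_sum_smul_sub_le hx]
  calc |x i| ≤ G * X := hg x hx i
    _ = G * (l * X) / l := by field_simp
    _ ≤ G * (2 * ‖∑ i, x i • P i‖) / l := by gcongr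
    _ = 2 * G / l * ‖∑ i, x i • P i‖ := by ring

-- The edges of `Q` sum to zero; expanding this in terms of the vertices of `g` yields a combination
-- whose weights are the differences of the scales.
lemma exists_common_scale {P : Fin 3 → Fin 3 → E} {s : Fin 3 → ℝ} (hg : IsNondegenerate G g)
    (hG : 0 ≤ G) (hs : ∀ i, 0 < s i) (hPQ : ∀ i j, i ≠ j → P i j = Q j)
    (hP : ∀ i, IsNearHomothet δ (s i) g (P i)) :
    ∃ l, 0 < l ∧ ∀ i, s i ≤ 3 * l ∧ |s i - l| ≤ 3 * G * δ * l := by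
  have hedge : ∀ i j k, i ≠ j → i ≠ k → ‖Q j - Q k - s i • (g j - g k)‖ ≤ δ * s i :=
    fun i j k hij hik => hPQ i j hij ▸ hPQ i k hik ▸ hP i j k
  have hclose : ‖∑ i, (s (i + 2) - s (i + 1)) • g i‖ ≤ δ * (s 0 + s 1 + s 2) := by
    have hcycle : ∑ i, (s (i + 2) - s (i + 1)) • g i =
        -∑ i, (Q (i + 1) - Q (i + 2) - s i • (g (i + 1) - g (i + 2))) := by
      simp only [Fin.sum_univ_three, Fin.reduceAdd]
      module
    rw [hcycle, norm_neg, ← Fin.sum_univ_three, Finset.mul_sum]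
    exact norm_sum_le_of_le _ fun i _ => hedge i _ _ (by revert i; decide) (by revert i; decide)
  have hdiff : ∀ i, |s (i + 2) - s (i + 1)| ≤ G * δ * (s 0 + s 1 + s 2) := fun i => by
    rw [mul_assoc]
    refine (hg (fun i => s (i + 2) - s (i + 1)) ?_ i).trans (by gcongr)
    simp only [Fin.sum_univ_three, Fin.reduceAdd]
    ring
  refine ⟨(s 0 + s 1 + s 2) / 3, by linarith [hs 0, hs 1, hs 2], fun i => ?_⟩
  have h0 := abs_le.1 (hdiff 0)
  have h1 := abs_le.1 (hdiff 1)
  have h2 := abs_le.1 (hdiff 2)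
  simp only [Fin.reduceAdd] at h0 h1 h2
  rw [abs_le]
  obtain rfl | rfl | rfl : i = 0 ∨ i = 1 ∨ i = 2 := by revert i; decide
  all_goals constructorm* _ ∧ _ <;> linarith [hs 0, hs 1, hs 2]

lemma exists_common_isNearHomothet {P : Fin 3 → Fin 3 → E} (hg : g ∈ shapes M G) (hG : 0 ≤ G)
    (hδ : 0 ≤ δ) (hPQ : ∀ i j, i ≠ j → P i j = Q j)
    (hP : ∀ i, ∃ s > 0, IsNearHomothet δ s g (P i)) :
    ∃ l > 0, (∀ i, IsNearHomothet (3 * (1 + 2 * G * M) * δ) l g (P i)) ∧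
      IsNearHomothet (3 * (1 + 2 * G * M) * δ) l g Q := by
  choose s hs hP using hP
  obtain ⟨l, hl, hsl⟩ := exists_common_scale hg.2 hG hs hPQ hP
  have hPl : ∀ i, IsNearHomothet (3 * (1 + 2 * G * M) * δ) l g (P i) := fun i =>
    (hP i).of_scale hg.1 hδ (hsl i).1 (hsl i).2
  refine ⟨l, hl, hPl, fun j k => ?_⟩
  obtain ⟨i, hij, hik⟩ : ∃ i, i ≠ j ∧ i ≠ k := by revert j k; decide
  exact hPQ i j hij ▸ hPQ i k hik ▸ hPl i j k

end NormedSpace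

lemma IsNondegenerate.affineIndependent {ι : Type*} [Fintype ι] [NormedSpace ℝ E] {Q : ι → E}
    {K : ℝ} (hQ : IsNondegenerate K Q) : AffineIndependent ℝ Q := by
  rw [affineIndependent_iff_of_fintype]
  intro x hx hxQ i
  rw [Finset.weightedVSub_eq_linear_combination _ hx] at hxQ
  simpa [hxQ] using hQ x hx i

lemma IsNondegenerate.exists_decomposition {ι : Type*} [Fintype ι] [Nonempty ι]
    [InnerProductSpace ℝ E] [FiniteDimensional ℝ E] (hcard : Fintype.card ι = Module.finrank ℝ E)
    {Q : ι → E} {K : ℝ} (hQ : IsNondegenerate K Q) (hK : 0 ≤ K) :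
    ∃ n : E, ∀ e : E, ∃ (x : ι → ℝ) (s : ℝ),
      ∑ i, x i = 0 ∧ (∀ i, |x i| ≤ K * ‖e‖) ∧ e = ∑ i, x i • Q i + s • n := by
  set U := vectorSpan ℝ (Set.range Q)
  have hU : Module.finrank ℝ U + 1 = Fintype.card ι :=
    hQ.affineIndependent.finrank_vectorSpan_add_one
  have hUorth : Module.finrank ℝ Uᗮ = 1 := by
    have := U.finrank_add_finrank_orthogonal
    omega
  obtain ⟨n, -, hn⟩ := finrank_eq_one_iff'.1 hUorth
  refine ⟨n, fun e => ?_⟩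
  obtain ⟨s, hs⟩ := hn ⟨e - U.starProjection e, U.sub_starProjection_mem_orthogonal e⟩
  obtain ⟨x, hx, hxQ⟩ := exists_sum_smul_eq_of_mem_vectorSpan (U.starProjection_apply_mem e)
  refine ⟨x, s, hx, fun i => (hQ x hx i).trans ?_, ?_⟩
  · rw [hxQ]
    gcongr
    exact U.norm_starProjection_apply_le e
  · have hsn : s • (n : E) = e - U.starProjection e := congrArg Subtype.val hs
    rw [hxQ, hsn, add_sub_cancel]

end NearHomothety

section BadIntersection

lemma intersectBadly_of_mem {A B : Finset E3} {v x : E3} (hvA : v ∈ A) (hvB : v ∈ B)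
    (hxA : x ∈ intrinsicInterior ℝ (convexHull ℝ (A : Set E3)))
    (hxB : x ∈ intrinsicInterior ℝ (convexHull ℝ (B : Set E3))) : IntersectBadly A B :=
  ⟨⟨v, hvA, hvB, subset_convexHull ℝ _ hvA, subset_convexHull ℝ _ hvB⟩,
    x, ⟨intrinsicInterior_subset hxA, intrinsicInterior_subset hxB⟩, hxA, hxB⟩

lemma IsThick.midpoint_mem {E : Type*} [NormedAddCommGroup E] [NormedSpace ℝ E] {η : ℝ} {s : Set E}
    {P : Fin 3 → E} (h : IsThick η s P) (hη : 0 < η) {i j : Fin 3} (hij : i ≠ j) :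
    midpoint ℝ (P i) (P j) ∈ intrinsicInterior ℝ (convexHull ℝ s) := by
  obtain ⟨k, hik, hjk⟩ := exists_third hij
  convert h.2 (fun l => if l = k then 0 else 1 / 2) ?_ fun l => ?_
  · rw [sum_fin_three_of_ne _ hij hik hjk]
    simp [hik, hjk, midpoint_eq_smul_add]
  · rw [sum_fin_three_of_ne _ hij hik hjk]
    norm_num [hik, hjk]
  · split_ifs <;> constructor <;> linarith

lemma intersectBadly_of_common_edge {η : ℝ} {A B : Finset E3} {P Q : Fin 3 → E3} (hη : 0 < η)
    (hA : IsThick η (A : Set E3) P) (hB : IsThick η (B : Set E3) Q) {i j : Fin 3} (hij : i ≠ j)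
    (hi : P i = Q i) (hj : P j = Q j) : IntersectBadly A B :=
  intersectBadly_of_mem (v := P i) (hA.1 i) (hi ▸ hB.1 i) (hA.midpoint_mem hη hij)
    (hi ▸ hj ▸ hB.midpoint_mem hη hij)

-- The point is a combination of the vertices of `P` whose weight at `P i` is `z`. Its description
-- in terms of `Q` becomes symmetric under exchanging `i` and `j` once `y` is the analogue of `x i`
-- for a second triangle that deviates from `Q` in the vertex `j`.
lemma IsThick.sum_perturbed_mem {E : Type*} [NormedAddCommGroup E] [NormedSpace ℝ E] {η θ : ℝ}
    {A : Set E} {P Q : Fin 3 → E} (h : IsThick η A P) (hη : 0 < η) (hθη : θ ≤ η)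
    (hθ : θ ≤ 1 / 2) {i j k : Fin 3} (hij : i ≠ j) (hik : i ≠ k) (hjk : j ≠ k)
    (hj : P j = Q j) (hk : P k = Q k) {x : Fin 3 → ℝ} {s y z u : ℝ} {n : E}
    (hi : P i = Q i + ∑ l, x l • Q l + s • n) (hx : ∑ l, x l = 0) (hxj : |x j| ≤ θ) (hy : |y| ≤ θ)
    (hz : 0 ≤ z) (hu : 0 ≤ u) (hzu : z + u = 1 / 2) :
    (z * (1 + x i)) • Q i + (u * (1 + y)) • Q j + (1 - z * (1 + x i) - u * (1 + y)) • Q k +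
      (z * s) • n ∈ intrinsicInterior ℝ (convexHull ℝ A) := by
  rw [sum_fin_three_of_ne _ hij hik hjk] at hx hi
  obtain ⟨d, hd⟩ : ∃ d, d = z * x j - u * y := ⟨_, rfl⟩
  have hdθ : |d| ≤ θ / 2 := by
    calc |d| ≤ |z * x j| + |u * y| := hd ▸ abs_sub _ _
      _ = z * |x j| + u * |y| := by rw [abs_mul, abs_mul, abs_of_nonneg hz, abs_of_nonneg hu]
      _ ≤ z * θ + u * θ := by gcongr
      _ = θ / 2 := by rw [← add_mul, hzu]; ring
  rw [abs_le] at hdθ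
  let w : Fin 3 → ℝ := fun l => if l = i then z else if l = j then u - d else 1 / 2 + d
  have hwi : w i = z := if_pos rfl
  have hwj : w j = u - d := by simp [w, hij.symm]
  have hwk : w k = 1 / 2 + d := by simp [w, hik.symm, hjk.symm]
  convert h.2 w ?_ fun l => ?_
  · rw [sum_fin_three_of_ne _ hij hik hjk, hwi, hwj, hwk, hi, hj, hk, hd]
    rw [show x k = -x i - x j by linarith, show u = 1 / 2 - z by linarith]
    module
  · rw [sum_fin_three_of_ne _ hij hik hjk, hwi, hwj, hwk]
    linarith
  · dsimp only [w]
    split_ifs <;> constructor <;> linarith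

lemma exists_nonneg_mul_eq_mul {s t : ℝ} (hst : 0 ≤ s * t) :
    ∃ z u : ℝ, 0 ≤ z ∧ 0 ≤ u ∧ z + u = 1 / 2 ∧ z * s = u * t := by
  obtain h0 | h0 := eq_or_ne (s + t) 0
  · obtain rfl : s = 0 := by nlinarith
    obtain rfl : t = 0 := by linarith
    exact ⟨1 / 2, 0, by norm_num⟩
  · refine ⟨t * (s + t) / (2 * (s + t) ^ 2), s * (s + t) / (2 * (s + t) ^ 2), ?_, ?_, ?_, ?_⟩
    · exact div_nonneg (by nlinarith [sq_nonneg t]) (by positivity)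
    · exact div_nonneg (by nlinarith [sq_nonneg s]) (by positivity)
    · field_simp
      ring
    · ring

lemma exists_ne_mul_nonneg (s : Fin 3 → ℝ) : ∃ i j, i ≠ j ∧ 0 ≤ s i * s j := by
  by_contra! h
  have h01 := h 0 1 (by decide)
  have h02 := h 0 2 (by decide)
  have h12 := h 1 2 (by decide)
  nlinarith [mul_pos_of_neg_of_neg h01 h02, sq_nonneg (s 0)]

lemma intersectBadly_of_same_side {η θ : ℝ} {A B : Finset E3} {P P' Q : Fin 3 → E3} (hη : 0 < η)
    (hθη : θ ≤ η) (hθ : θ ≤ 1 / 2) (hA : IsThick η (A : Set E3) P) (hB : IsThick η (B : Set E3) P')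
    {i j : Fin 3} (hij : i ≠ j) (hP : ∀ l, i ≠ l → P l = Q l) (hP' : ∀ l, j ≠ l → P' l = Q l)
    {x y : Fin 3 → ℝ} {s t : ℝ} {n : E3} (hx : ∑ l, x l = 0) (hy : ∑ l, y l = 0)
    (hxθ : ∀ l, |x l| ≤ θ) (hyθ : ∀ l, |y l| ≤ θ) (hst : 0 ≤ s * t)
    (hi : P i = Q i + ∑ l, x l • Q l + s • n) (hj : P' j = Q j + ∑ l, y l • Q l + t • n) :
    IntersectBadly A B := by
  obtain ⟨k, hik, hjk⟩ := exists_third hij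
  obtain ⟨z, u, hz, hu, hzu, hzsut⟩ := exists_nonneg_mul_eq_mul hst
  refine intersectBadly_of_mem (v := Q k) (hP k hik ▸ hA.1 k) (hP' k hjk ▸ hB.1 k)
    (hA.sum_perturbed_mem hη hθη hθ hij hik hjk (hP j hij) (hP k hik) hi hx (hxθ j) (hyθ j)
      hz hu hzu) ?_
  convert hB.sum_perturbed_mem hη hθη hθ hij.symm hjk hik (hP' i hij.symm) (hP' k hjk) hj hy (hyθ i)
    (hxθ i) hu hz (by rwa [add_comm]) using 1
  rw [hzsut]
  module

lemma exists_intersectBadly_of_three_triangles {η δ M G : ℝ} {g Q : Fin 3 → E3}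
    {P : Fin 3 → Fin 3 → E3} {H : Fin 3 → Finset E3} (hη : 0 < η) (hδ : 0 ≤ δ)
    (hM : 0 ≤ M) (hG : 0 ≤ G) (hδη : 4 * G * (3 * (1 + 2 * G * M) * δ) ≤ min η (1 / 2))
    (hg : g ∈ shapes M G) (hH : ∀ i, IsThick η (H i : Set E3) (P i))
    (hP : ∀ i, ∃ l > 0, IsNearHomothet δ l g (P i)) (hPQ : ∀ i j, i ≠ j → P i j = Q j) :
    ∃ i j, i ≠ j ∧ IntersectBadly (H i) (H j) := by
  obtain ⟨l, hl, hPl, hQl⟩ := exists_common_isNearHomothet hg hG hδ hPQ hP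
  have hD0 : 0 ≤ 3 * (1 + 2 * G * M) * δ := by positivity
  generalize 3 * (1 + 2 * G * M) * δ = D at *
  obtain ⟨hDη, hD2⟩ := le_min_iff.1 hδη
  have hQ : IsNondegenerate (2 * G / l) Q :=
    hQl.isNondegenerate hg.2 hl hG hD0 (by linarith)
  obtain ⟨n, hn⟩ := hQ.exists_decomposition (by simp) (by positivity)
  choose x t hx hxle hxt using fun i => hn (P i i - Q i)
  have hxθ : ∀ i j, |x i j| ≤ 4 * G * D := fun i j => by
    obtain ⟨k, hki⟩ := exists_ne i
    calc |x i j| ≤ 2 * G / l * ‖P i i - Q i‖ := hxle i j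
      _ ≤ 2 * G / l * (2 * D * l) := by
          gcongr
          exact (hPl i).norm_sub_le hQl (hPQ i k hki.symm)
      _ = 4 * G * D := by field_simp; ring
  obtain ⟨i, j, hij, htij⟩ := exists_ne_mul_nonneg t
  have hPi : ∀ i, P i i = Q i + ∑ l, x i l • Q l + t i • n := fun i => by
    rw [add_assoc, ← hxt i, add_sub_cancel]
  exact ⟨i, j, hij, intersectBadly_of_same_side hη hDη hD2 (hH i) (hH j) hij (hPQ i) (hPQ j)
    (hx i) (hx j) (hxθ i) (hxθ j) htij (hPi i) (hPi j)⟩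

end BadIntersection

section RuzsaSzemeredi

open SimpleGraph TripartiteFromTriangles

universe u

lemma card_le_card_sq_of_explicitDisjoint {V : Type*} [Fintype V] (t : Finset (V × V × V))
    [ExplicitDisjoint t] : t.card ≤ Fintype.card V ^ 2 := by
  have hinj : Set.InjOn (fun q : V × V × V => (q.1, q.2.1)) t := by
    rintro ⟨a, b, c⟩ h ⟨a', b', c'⟩ h' heq
    obtain ⟨rfl, rfl⟩ := Prod.mk.inj heq
    rw [ExplicitDisjoint.inj₂ h h']
  calc t.card ≤ (Finset.univ : Finset (V × V)).card :=
        Finset.card_le_card_of_injOn _ (fun q _ => Finset.mem_univ _) hinj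
    _ = Fintype.card V ^ 2 := by rw [Finset.card_univ, Fintype.card_prod, sq]

lemma exists_card_le_mul_sq_of_noAccidental {ε : ℝ} (hε : 0 < ε) :
    ∃ N : ℕ, ∀ {V : Type u} [Fintype V] (t : Finset (V × V × V)) [ExplicitDisjoint t]
      [NoAccidental t], N ≤ Fintype.card V → (t.card : ℝ) ≤ ε * (Fintype.card V : ℝ) ^ 2 := by
  classical
  obtain ⟨β, hβ⟩ : ∃ β, β = triangleRemovalBound (ε / 9) := ⟨_, rfl⟩
  have hβ0 : 0 < β := hβ ▸ triangleRemovalBound_pos (by positivity)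
  obtain ⟨N, hN⟩ := exists_nat_gt (1 / (27 * β))
  refine ⟨N, fun {V} _ t _ _ hV => ?_⟩
  by_contra! hlt
  obtain ⟨n, hn⟩ : ∃ n, n = Fintype.card V := ⟨_, rfl⟩
  rw [← hn] at hV hlt
  have hnβ : 1 < 27 * β * n := by
    rw [div_lt_iff₀' (by positivity)] at hN
    exact hN.trans_le (by gcongr)
  have hn0 : (0 : ℝ) < n := pos_of_mul_pos_right (zero_lt_one.trans hnβ) (by positivity)
  have hfar : (graph t).FarFromTriangleFree (ε / 9) := by
    refine farFromTriangleFree (t := t) ?_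
    rw [← hn]
    push_cast
    linarith
  have hmany : β * ((Fintype.card (V ⊕ V ⊕ V) : ℕ) : ℝ) ^ 3 ≤ t.card := by
    rw [hβ, ← card_triangles t]
    convert hfar.le_card_cliqueFinset
  have hfew : (t.card : ℝ) ≤ n ^ 2 := by
    rw [hn]
    exact_mod_cast card_le_card_sq_of_explicitDisjoint t
  refine lt_irrefl ((n : ℝ) ^ 2) ?_
  calc (n : ℝ) ^ 2 < 27 * β * n * n ^ 2 := lt_mul_of_one_lt_left (by positivity) hnβ
    _ = β * ((Fintype.card (V ⊕ V ⊕ V) : ℕ) : ℝ) ^ 3 := by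
        simp only [Fintype.card_sum, ← hn]
        push_cast
        ring
    _ ≤ n ^ 2 := hmany.trans hfew

section VertexTriples

variable {V τ : Type*} [DecidableEq V] [Fintype τ] {P : τ → Fin 3 → V}

/-- The vertices of a family of triangles in the complete tripartite graph on three copies of `V`,
in the format of `SimpleGraph.TripartiteFromTriangles`. -/
def vertexTriples (P : τ → Fin 3 → V) : Finset (V × V × V) :=
  Finset.univ.image fun A => (P A 0, P A 1, P A 2)

lemma mem_vertexTriples {a b c : V} :
    (a, b, c) ∈ vertexTriples P ↔ ∃ A, P A 0 = a ∧ P A 1 = b ∧ P A 2 = c := by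
  simp [vertexTriples]

lemma card_vertexTriples (hedge : ∀ A B i j, i ≠ j → P A i = P B i → P A j = P B j → A = B) :
    (vertexTriples P).card = Fintype.card τ := by
  refine Finset.card_image_of_injective _ fun A B hAB => ?_
  simp only [Prod.mk.injEq] at hAB
  exact hedge A B 0 1 (by decide) hAB.1 hAB.2.1

lemma explicitDisjoint_vertexTriples
    (hedge : ∀ A B i j, i ≠ j → P A i = P B i → P A j = P B j → A = B) :
    ExplicitDisjoint (vertexTriples P) := by
  constructor <;> simp only [mem_vertexTriples]
  · rintro _ _ _ _ ⟨A, rfl, rfl, rfl⟩ ⟨B, rfl, h1, h2⟩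
    rw [hedge B A 1 2 (by decide) h1 h2]
  · rintro _ _ _ _ ⟨A, rfl, rfl, rfl⟩ ⟨B, h0, rfl, h2⟩
    rw [hedge B A 0 2 (by decide) h0 h2]
  · rintro _ _ _ _ ⟨A, rfl, rfl, rfl⟩ ⟨B, h0, h1, rfl⟩
    rw [hedge B A 0 1 (by decide) h0 h1]

lemma noAccidental_vertexTriples (hacc : ∀ (H : Fin 3 → τ) (Q : Fin 3 → V),
      (∀ i j, i ≠ j → P (H i) j = Q j) → ∃ i, P (H i) i = Q i) :
    NoAccidental (vertexTriples P) := by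
  constructor
  simp only [mem_vertexTriples]
  rintro a a' b b' c c' ⟨A, rfl, hAb, hAc⟩ ⟨B, hBa, rfl, hBc⟩ ⟨C, hCa, hCb, rfl⟩
  have := hacc ![A, B, C] ![a, b, c] (by simp [Fin.forall_fin_succ, *])
  simpa [Fin.exists_fin_succ, eq_comm] using this

end VertexTriples

lemma exists_card_le_mul_sq_of_triangles {X : Type u} {τ : Type*} {ε : ℝ} (hε : 0 < ε) :
    ∃ N : ℕ, ∀ (S : Finset X) (T : Finset τ) (P : τ → Fin 3 → X), N ≤ S.card →
      (∀ A ∈ T, ∀ i, P A i ∈ S) →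
      (∀ A ∈ T, ∀ B ∈ T, ∀ i j, i ≠ j → P A i = P B i → P A j = P B j → A = B) →
      (∀ H : Fin 3 → τ, (∀ i, H i ∈ T) → ∀ Q : Fin 3 → X,
        (∀ i j, i ≠ j → P (H i) j = Q j) → ∃ i, P (H i) i = Q i) →
      (T.card : ℝ) ≤ ε * (S.card : ℝ) ^ 2 := by
  classical
  obtain ⟨N, hN⟩ := exists_card_le_mul_sq_of_noAccidental.{u} hε
  refine ⟨N, fun S T P hS hPS hedge hacc => ?_⟩
  let P' : T → Fin 3 → S := fun A i => ⟨P A i, hPS A A.2 i⟩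
  have hedge' : ∀ A B i j, i ≠ j → P' A i = P' B i → P' A j = P' B j → A = B :=
    fun A B i j hij hi hj => Subtype.ext <|
      hedge A A.2 B B.2 i j hij (Subtype.ext_iff.1 hi) (Subtype.ext_iff.1 hj)
  have := explicitDisjoint_vertexTriples hedge'
  have : NoAccidental (vertexTriples P') := noAccidental_vertexTriples fun H Q hHQ => by
    obtain ⟨i, hi⟩ := hacc (fun i => H i) (fun i => (H i).2) (fun i => Q i)
      fun i j hij => Subtype.ext_iff.1 (hHQ i j hij)
    exact ⟨i, Subtype.ext hi⟩
  simpa [card_vertexTriples hedge'] using hN (vertexTriples P') (by simpa using hS)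

end RuzsaSzemeredi

section Counting

lemma exists_card_le_of_isNearHomothet {η δ M G ε : ℝ} (hη : 0 < η) (hδ : 0 ≤ δ) (hM : 0 ≤ M)
    (hG : 0 ≤ G) (hδη : 4 * G * (3 * (1 + 2 * G * M) * δ) ≤ min η (1 / 2)) (hε : 0 < ε) :
    ∃ N : ℕ, ∀ (S : Finset E3) (T : Finset (Finset E3)) (P : Finset E3 → Fin 3 → E3),
      N ≤ S.card → (∀ H ∈ T, H ⊆ S) → (∀ H ∈ T, IsThick η (H : Set E3) (P H)) →
      (∃ g ∈ shapes M G, ∀ H ∈ T, ∃ l > 0, IsNearHomothet δ l g (P H)) →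
      (∀ A ∈ T, ∀ B ∈ T, A ≠ B → ¬ IntersectBadly A B) →
      (T.card : ℝ) ≤ ε * (S.card : ℝ) ^ 2 := by
  obtain ⟨N, hN⟩ := exists_card_le_mul_sq_of_triangles (X := E3) (τ := Finset E3) hε
  refine ⟨N, fun S T P hS hTS hthick ⟨g, hg, hnear⟩ hbad => hN S T P hS ?_ ?_ ?_⟩
  · exact fun H hH i => hTS H hH ((hthick H hH).1 i)
  · intro A hA B hB i j hij hi hj
    by_contra hAB
    exact hbad A hA B hB hAB
      (intersectBadly_of_common_edge hη (hthick A hA) (hthick B hB) hij hi hj)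
  · intro H hH Q hQ
    obtain ⟨i, j, hij, hHbad⟩ := exists_intersectBadly_of_three_triangles hη hδ hM hG hδη hg
      (fun i => hthick _ (hH i)) (fun i => hnear _ (hH i)) hQ
    have hHij : H i = H j := by
      by_contra hne
      exact hbad _ (hH i) _ (hH j) hne hHbad
    exact ⟨i, hHij ▸ hQ j i hij.symm⟩

lemma card_le_of_forall_card_fiber_le {α β : Type*} [DecidableEq β] {T : Finset α} {F : Finset β}
    {f : α → β} (hf : ∀ a ∈ T, f a ∈ F) {C : ℝ} (hC : 0 ≤ C)
    (hfiber : ∀ b ∈ F, ((T.filter fun a => f a = b).card : ℝ) ≤ C / (F.card + 1)) :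
    (T.card : ℝ) ≤ C := by
  calc (T.card : ℝ) = ∑ b ∈ F, ((T.filter fun a => f a = b).card : ℝ) := by
        exact_mod_cast Finset.card_eq_sum_card_fiberwise hf
    _ ≤ F.card • (C / (F.card + 1)) := Finset.sum_le_card_nsmul _ _ _ hfiber
    _ = C * (F.card / (F.card + 1)) := by rw [nsmul_eq_mul]; ring
    _ ≤ C := mul_le_of_le_one_right hC (div_le_one_of_le₀ (by linarith) (by positivity))

lemma exists_card_le_of_exists_isThick {η M G ε : ℝ} (hη : 0 < η) (hM : 0 ≤ M) (hG : 0 ≤ G)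
    (hε : 0 < ε) :
    ∃ N : ℕ, ∀ (S : Finset E3) (T : Finset (Finset E3)), N ≤ S.card → (∀ H ∈ T, H ⊆ S) →
      (∀ H ∈ T, ∃ (P g : Fin 3 → E3) (l : ℝ), IsThick η (H : Set E3) P ∧ g ∈ shapes M G ∧ 0 < l ∧
        ∀ i j, P i - P j = l • (g i - g j)) →
      (∀ A ∈ T, ∀ B ∈ T, A ≠ B → ¬ IntersectBadly A B) →
      (T.card : ℝ) ≤ ε * (S.card : ℝ) ^ 2 := by
  classical
  obtain ⟨δ, hδ, hδη⟩ := exists_pos_mul_lt (lt_min hη one_half_pos) (24 * G * (1 + 2 * G * M))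
  obtain ⟨F, hFsub, hF⟩ := exists_finite_net_shapes (E := E3) M G hδ
  obtain ⟨N, hN⟩ := exists_card_le_of_isNearHomothet (ε := ε / (F.card + 1)) hη
    (mul_nonneg zero_le_two hδ.le) hM hG (by linarith) (by positivity)
  refine ⟨N, fun S T hS hTS hshape hbad => ?_⟩
  have hclass : ∀ H ∈ T, ∃ (P : Fin 3 → E3) (g' : Fin 3 → E3), IsThick η (H : Set E3) P ∧
      g' ∈ F ∧ ∃ l > 0, IsNearHomothet (2 * δ) l g' P := fun H hH => by
    obtain ⟨P, g, l, hthick, hg, hl, hPg⟩ := hshape H hH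
    obtain ⟨g', hg', hdist⟩ := hF g hg
    exact ⟨P, g', hthick, hg', l, hl, isNearHomothet_of_dist_le hPg hl.le hdist.le⟩
  choose! P g hthick hgF hnear using hclass
  refine card_le_of_forall_card_fiber_le hgF (by positivity) fun g₀ hg₀ => ?_
  rw [mul_div_right_comm]
  refine hN S _ P hS ?_ ?_ ⟨g₀, hFsub hg₀, ?_⟩ ?_ <;> simp only [Finset.mem_filter]
  · exact fun H hH => hTS H hH.1
  · exact fun H hH => hthick H hH.1
  · exact fun H hH => hH.2 ▸ hnear H hH.1
  · exact fun A hA B hB => hbad A hA.1 B hB.1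

end Counting

theorem stmt10 (c α : ℝ) (hc : 1 ≤ c) (hα₀ : 0 < α) (hα₁ : α < π / 2) :
    ∀ ε : ℝ, 0 < ε → ∃ N : ℕ, ∀ n : ℕ, N ≤ n →
      ∀ (S : Finset E3) (T : Finset (Finset E3)), S.card = n →
        (∀ H ∈ T, H ⊆ S ∧ IsFatHexagonSet c α H) →
        (∀ H₁ ∈ T, ∀ H₂ ∈ T, H₁ ≠ H₂ → ¬ IntersectBadly H₁ H₂) →
        (T.card : ℝ) ≤ ε * (n : ℝ) ^ 2 := by
  intro ε hε
  have hc₀ : 0 < c := by linarith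
  have hsin : 0 < Real.sin α := Real.sin_pos_of_pos_of_lt_pi hα₀ (by linarith)
  obtain ⟨N, hN⟩ := exists_card_le_of_exists_isThick (M := 2 * c) (G := 2 * c / Real.sin α)
    (η := Real.sin α / (4 * c ^ 2) / (8 * (1 + c ^ 2 / Real.sin α)))
    (by positivity) (by positivity) (by positivity) hε
  refine ⟨N, fun n hn S T hS hT hbad => ?_⟩
  subst hS
  exact hN S T hn (fun H hH => (hT H hH).1)
    (fun H hH => (hT H hH).2.exists_isThick_shape hc₀.le hα₀) hbad
end
end
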